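/- Let G = (1/2) ξ·∇_xφ u − ∇_xφ·∇_ξ u + Γ(u,u), where φ is the Poisson potential of u. Let −3 ≤ γ < −2, N ≥ 4, ℓ₀ > 3/2, and ℓ − 1 ≥ max{N, ℓ₀/2 − 1/(γ+2)}. Then there is C > 0 such that for all t ≥ 0 and all sufficiently smooth rapidly decaying u: ‖⟨ξ⟩^{−(γ+2)ℓ₀/2} G(t)‖_{Z₁} + Σ_{|α|≤1} ‖⟨ξ⟩^{−(γ+2)ℓ₀/2} ∂^α_x G(t)‖ ≤ C |||u(t)|||²_{N,ℓ−1}. -/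

import Mathlib

open MeasureTheory Real

noncomputable section VPL

/-- The velocity/space domain `ℝ³`. -/
abbrev E3 : Type := EuclideanSpace ℝ (Fin 3)

/-- Japanese bracket `⟨ξ⟩ = (1+|ξ|²)^{1/2}`. -/
def jap (ξ : E3) : ℝ := Real.sqrt (1 + ‖ξ‖ ^ 2)

/-- Normalized global Maxwellian `M(ξ) = (2π)^{-3/2} e^{-|ξ|²/2}`. -/
def Mx (ξ : E3) : ℝ := (2 * π) ^ (-(3 : ℝ) / 2) * Real.exp (-‖ξ‖ ^ 2 / 2)

/-- `M^{1/2}`. -/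
def sqrtM (ξ : E3) : ℝ := Real.sqrt (Mx ξ)

/-- Partial derivative in the `i`-th coordinate. -/
def pd (i : Fin 3) (f : E3 → ℝ) (ξ : E3) : ℝ :=
  fderiv ℝ f ξ (EuclideanSpace.single i 1)

/-- The Landau collision kernel `B^{ij}(ξ) = (δ_{ij} - ξ_iξ_j/|ξ|²)|ξ|^{γ+2}`. -/
def Bij (γ : ℝ) (i j : Fin 3) (ξ : E3) : ℝ :=
  ((if i = j then (1 : ℝ) else 0) - ξ i * ξ j / ‖ξ‖ ^ 2) * ‖ξ‖ ^ (γ + 2)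

/-- The Landau collision operator `Q(f,g)`. -/
def Qop (γ : ℝ) (f g : E3 → ℝ) (ξ : E3) : ℝ :=
  ∑ i : Fin 3, ∑ j : Fin 3,
    pd i (fun ζ => ∫ ξ', Bij γ i j (ζ - ξ') * (f ξ' * pd j g ζ - pd j f ξ' * g ζ)) ξ

/-- The linearized Landau operator `L`. -/
def Lop (γ : ℝ) (u : E3 → ℝ) (ξ : E3) : ℝ :=
  -((Mx ξ) ^ (-(1 : ℝ) / 2)) *
    (Qop γ Mx (fun ζ => sqrtM ζ * u ζ) ξ + Qop γ (fun ζ => sqrtM ζ * u ζ) Mx ξ)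

/-- The nonlinear term `Γ(u₁,u₂)`. -/
def Gam (γ : ℝ) (u₁ u₂ : E3 → ℝ) (ξ : E3) : ℝ :=
  (Mx ξ) ^ (-(1 : ℝ) / 2) *
    Qop γ (fun ζ => sqrtM ζ * u₁ ζ) (fun ζ => sqrtM ζ * u₂ ζ) ξ

/-- The Landau collision frequency `σ^{ij} = B^{ij} ∗ M`. -/
def sigmaij (γ : ℝ) (i j : Fin 3) (ξ : E3) : ℝ := ∫ ξ', Bij γ i j (ξ - ξ') * Mx ξ'

/-- The time–velocity weight `w_{τ,λ}(t,ξ) = ⟨ξ⟩^{(γ+2)τ} exp(λ⟨ξ⟩²/(1+t)^ϑ)`. -/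
def wt (γ τ lam ϑ t : ℝ) (ξ : E3) : ℝ :=
  jap ξ ^ ((γ + 2) * τ) * Real.exp (lam * jap ξ ^ 2 / (1 + t) ^ ϑ)

/-- Weighted `L²_ξ` norm squared `|u|²_{τ,λ}`. -/
def vnormSq (γ τ lam ϑ t : ℝ) (u : E3 → ℝ) : ℝ :=
  ∫ ξ, (wt γ τ lam ϑ t ξ) ^ 2 * (u ξ) ^ 2

/-- Weighted dissipation norm squared `|u|²_{σ,τ,λ}`. -/
def vsigSq (γ τ lam ϑ t : ℝ) (u : E3 → ℝ) : ℝ :=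
  ∑ i : Fin 3, ∑ j : Fin 3, ∫ ξ,
    (wt γ τ lam ϑ t ξ) ^ 2 *
      (sigmaij γ i j ξ * pd i u ξ * pd j u ξ +
        sigmaij γ i j ξ * (ξ i / 2) * (ξ j / 2) * (u ξ) ^ 2)

/-- `L²_ξ` inner product. -/
def ipv (u v : E3 → ℝ) : ℝ := ∫ ξ, u ξ * v ξ

/-- Macroscopic coefficient `a`. -/
def aC (u : E3 → ℝ) : ℝ := ∫ ξ, sqrtM ξ * u ξ

/-- Macroscopic coefficient `b_i`. -/
def bC (i : Fin 3) (u : E3 → ℝ) : ℝ := ∫ ξ, ξ i * sqrtM ξ * u ξ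

/-- Macroscopic coefficient `c`. -/
def cC (u : E3 → ℝ) : ℝ := (1 / 6) * ∫ ξ, (‖ξ‖ ^ 2 - 3) * sqrtM ξ * u ξ

/-- Macroscopic projection `Pu`. -/
def Pv (u : E3 → ℝ) (ξ : E3) : ℝ :=
  (aC u + (∑ i : Fin 3, bC i u * ξ i) + cC u * (‖ξ‖ ^ 2 - 3)) * sqrtM ξ

/-- Microscopic part `{I - P}u`. -/
def IPv (u : E3 → ℝ) (ξ : E3) : ℝ := u ξ - Pv u ξ

/-- Multi-indices on `ℝ³` as triples of naturals. -/
abbrev MIdx : Type := ℕ × ℕ × ℕ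

/-- Length `|β|` of a multi-index. -/
def deg (β : MIdx) : ℕ := β.1 + β.2.1 + β.2.2

/-- Iterated partial derivative `∂^β`. -/
def pdM (β : MIdx) (f : E3 → ℝ) : E3 → ℝ :=
  (pd 0)^[β.1] ((pd 1)^[β.2.1] ((pd 2)^[β.2.2] f))

/-- The finite set of multi-indices of length at most `N`. -/
def midx (N : ℕ) : Finset MIdx :=
  ((Finset.range (N + 1)) ×ˢ (Finset.range (N + 1)) ×ˢ (Finset.range (N + 1))).filter
    fun β => deg β ≤ N

/-- Pairs `(α,β)` of multi-indices with `|α|+|β| ≤ N`. -/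
def midxP (N : ℕ) : Finset (MIdx × MIdx) :=
  ((midx N) ×ˢ (midx N)).filter fun p => deg p.1 + deg p.2 ≤ N

/-- Partial derivative in the space variable of `u = u(x,ξ)`. -/
def pdx (i : Fin 3) (u : E3 → E3 → ℝ) : E3 → E3 → ℝ :=
  fun x ξ => fderiv ℝ (fun y => u y ξ) x (EuclideanSpace.single i 1)

/-- Iterated space derivative `∂^α_x` of `u = u(x,ξ)`. -/
def pdxM (α : MIdx) (u : E3 → E3 → ℝ) : E3 → E3 → ℝ :=
  (pdx 0)^[α.1] ((pdx 1)^[α.2.1] ((pdx 2)^[α.2.2] u))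

/-- Mixed derivative `∂^α_β = ∂^α_x ∂^β_ξ` of `u = u(x,ξ)`. -/
def pdab (α β : MIdx) (u : E3 → E3 → ℝ) : E3 → E3 → ℝ :=
  fun x => pdM β (pdxM α u x)

/-- Weighted `L²_{x,ξ}` norm squared `‖u‖²_{τ,λ}`. -/
def xnormSq (γ τ lam ϑ t : ℝ) (u : E3 → E3 → ℝ) : ℝ := ∫ x, vnormSq γ τ lam ϑ t (u x)

/-- Weighted dissipation norm squared `‖u‖²_{σ,τ,λ}`. -/
def xsigSq (γ τ lam ϑ t : ℝ) (u : E3 → E3 → ℝ) : ℝ := ∫ x, vsigSq γ τ lam ϑ t (u x)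

/-- `L²_{x,ξ}` inner product. -/
def ipx (u v : E3 → E3 → ℝ) : ℝ := ∫ x, ∫ ξ, u x ξ * v x ξ

/-- `a(x)`. -/
def aF (u : E3 → E3 → ℝ) (x : E3) : ℝ := aC (u x)

/-- `b_i(x)`. -/
def bF (i : Fin 3) (u : E3 → E3 → ℝ) (x : E3) : ℝ := bC i (u x)

/-- `c(x)`. -/
def cF (u : E3 → E3 → ℝ) (x : E3) : ℝ := cC (u x)

/-- `{I-P}u` for `u = u(x,ξ)`. -/
def IPx (u : E3 → E3 → ℝ) : E3 → E3 → ℝ := fun x => IPv (u x)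

/-- The Poisson potential `φ = -(4π|x|)^{-1} ∗ ρ`. -/
def poisson (ρ : E3 → ℝ) (x : E3) : ℝ := -∫ y, ρ y / (4 * π * ‖x - y‖)

/-- The self-consistent potential of `u`. -/
def phiF (u : E3 → E3 → ℝ) : E3 → ℝ := poisson (aF u)

/-- `L²_x` norm squared. -/
def L2Sq (f : E3 → ℝ) : ℝ := ∫ x, (f x) ^ 2

/-- `H^N_x` norm squared. -/
def HsobSq (N : ℕ) (f : E3 → ℝ) : ℝ := ∑ α ∈ midx N, L2Sq (pdM α f)

/-- `‖∇_x f‖²_{H^N}`. -/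
def gradSobSq (N : ℕ) (f : E3 → ℝ) : ℝ := ∑ i : Fin 3, HsobSq N (pd i f)

/-- `‖∇_x (a,b,c)‖²_{H^N}`. -/
def abcGradSobSq (N : ℕ) (u : E3 → E3 → ℝ) : ℝ :=
  gradSobSq N (aF u) + (∑ i : Fin 3, gradSobSq N (bF i u)) + gradSobSq N (cF u)

/-- `‖∇²_x f‖²_{H^N}`. -/
def hessSobSq (N : ℕ) (f : E3 → ℝ) : ℝ :=
  ∑ i : Fin 3, ∑ j : Fin 3, HsobSq N (pd i (pd j f))

/-- Full instant energy norm `|||u(t)|||²_{N,ℓ,λ}`. -/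
def triSq (γ : ℝ) (N : ℕ) (ℓ lam ϑ t : ℝ) (u : E3 → E3 → ℝ) : ℝ :=
  (∑ p ∈ midxP N, xnormSq γ ((deg p.2 : ℝ) - ℓ) lam ϑ t (pdab p.1 p.2 u))
    + gradSobSq N (phiF u)

/-- `Z₁ = L²_ξ(L¹_x)` norm. -/
def Z1 (u : E3 → E3 → ℝ) : ℝ := Real.sqrt (∫ ξ, (∫ x, |u x ξ|) ^ 2)

/-- Un-currying of a Schwartz function on `ℝ³_x × ℝ³_ξ`. -/
def uc (u : SchwartzMap (E3 × E3) ℝ) : E3 → E3 → ℝ := fun x ξ => u (x, ξ)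

end VPL

noncomputable section

/-- The nonlinear source term `G = ½ ξ·∇_xφ u − ∇_xφ·∇_ξ u + Γ(u,u)`. -/
def Gfun (γ : ℝ) (u : E3 → E3 → ℝ) : E3 → E3 → ℝ := fun x ξ =>
  (1 / 2) * (∑ i : Fin 3, ξ i * pd i (phiF u) x) * u x ξ
    - (∑ i : Fin 3, pd i (phiF u) x * pd i (u x) ξ)
    + Gam γ (u x) (u x) ξ

noncomputable section
open scoped LineDeriv SchwartzMap ContDiff

abbrev SS : Type := SchwartzMap (E3 × E3) ℝ

def ex (i : Fin 3) : E3 × E3 := (EuclideanSpace.single i 1, 0)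
def ev (i : Fin 3) : E3 × E3 := (0, EuclideanSpace.single i 1)

def dm (m : E3 × E3) : Module.End ℝ SS :=
  (LineDeriv.lineDerivOpCLM ℝ SS m : SS →L[ℝ] SS).toLinearMap

lemma dm_apply (m : E3 × E3) (h : SS) (z : E3 × E3) : dm m h z = fderiv ℝ h z m := by
  exact SchwartzMap.lineDerivOp_apply_eq_fderiv m h z

def dx (i : Fin 3) : Module.End ℝ SS := dm (ex i)
def dv (i : Fin 3) : Module.End ℝ SS := dm (ev i)

lemma dm_comm (m n : E3 × E3) : Commute (dm m) (dm n) := by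
  show dm m * dm n = dm n * dm m
  ext h z
  show dm m (dm n h) z = dm n (dm m h) z
  rw [dm_apply, dm_apply]
  have hd : ∀ k : E3 × E3, (dm k h : E3 × E3 → ℝ) = fun z => fderiv ℝ h z k := by
    intro k; ext z; exact dm_apply k h z
  rw [hd, hd]
  have hdf : DifferentiableAt ℝ (fderiv ℝ h) z :=
    (((h.smooth 2).fderiv_right (m := 1) (by norm_num)).differentiable (by norm_num)) z
  rw [fderiv_clm_apply hdf (by fun_prop), fderiv_clm_apply hdf (by fun_prop)]
  simp
  have := (h.smooth 2).contDiffAt.isSymmSndFDerivAt (x := z) (by simp)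
  exact this m n

lemma SS_hasFDerivAt (h : SS) (z : E3 × E3) : HasFDerivAt h (fderiv ℝ h z) z := h.hasFDerivAt z

lemma slice_x (h : SS) (x ξ : E3) :
    HasFDerivAt (fun y => h (y, ξ)) ((fderiv ℝ h (x, ξ)).comp (ContinuousLinearMap.inl ℝ E3 E3)) x := by
  have := (h.hasFDerivAt (x, ξ)).comp x (hasFDerivAt_prodMk_left (𝕜 := ℝ) x ξ)
  exact this

lemma slice_v (h : SS) (x ξ : E3) :
    HasFDerivAt (fun y => h (x, y)) ((fderiv ℝ h (x, ξ)).comp (ContinuousLinearMap.inr ℝ E3 E3)) ξ := by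
  have := (h.hasFDerivAt (x, ξ)).comp ξ (hasFDerivAt_prodMk_right (𝕜 := ℝ) x ξ)
  exact this

lemma pdx_uc (i : Fin 3) (h : SS) : pdx i (uc h) = uc (dx i h) := by
  ext x ξ
  simp only [pdx, uc, (slice_x h x ξ).fderiv]
  rw [dx, dm_apply]; rfl

lemma pd_uc (i : Fin 3) (h : SS) (x : E3) : pd i (uc h x) = uc (dv i h) x := by
  ext ξ
  have : uc h x = fun y => h (x, y) := rfl
  simp only [pd, this, (slice_v h x ξ).fderiv]
  rw [uc, dv, dm_apply]; rfl

/-! Gaussian -/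

lemma sqrtM_eq (ξ : E3) :
    sqrtM ξ = (2 * π) ^ (-(3 : ℝ) / 4) * Real.exp (-‖ξ‖ ^ 2 / 4) := by
  unfold sqrtM Mx
  have h2 : (0:ℝ) < 2 * π := by positivity
  rw [Real.sqrt_eq_iff_mul_self_eq (by positivity) (by positivity)]
  have : (2 * π) ^ (-(3 : ℝ) / 2) = (2 * π) ^ (-(3 : ℝ) / 4) * (2 * π) ^ (-(3 : ℝ) / 4) := by
    rw [← Real.rpow_add h2]; norm_num
  rw [this]
  have : Real.exp (-‖ξ‖ ^ 2 / 2) = Real.exp (-‖ξ‖ ^ 2 / 4) * Real.exp (-‖ξ‖ ^ 2 / 4) := by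
    rw [← Real.exp_add]; ring_nf
  rw [this]; ring

lemma gauss_temperate : (fun ξ : E3 => Real.exp (-‖ξ‖ ^ 2 / 4)).HasTemperateGrowth := by
  set t := {y : ℝ | -1 < y}
  have ht : Set.range (fun (x : E3) ↦ ‖x‖ ^ 2) ⊆ t := by
    rintro - ⟨y, rfl⟩
    simp only [Set.mem_ofPred_eq, t]
    have : 0 ≤ ‖y‖ ^ 2 := by positivity
    linarith
  have hcd : ContDiff ℝ ∞ (fun x : ℝ ↦ Real.exp ((-1/4) * x)) := by fun_prop
  have hunique : UniqueDiffOn ℝ t := (isOpen_lt' (-1)).uniqueDiffOn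
  have := Function.HasTemperateGrowth.comp' (g := fun x : ℝ ↦ Real.exp ((-1/4) * x)) ht hunique hcd.contDiffOn ?_ (by fun_prop)
  · convert this using 2 with x
    simp only [Function.comp]; ring_nf
  intro N
  refine ⟨0, Real.exp 1, by positivity, ?_⟩
  intro n hn x hx
  rw [norm_iteratedFDerivWithin_eq_norm_iteratedDerivWithin,
    iteratedDerivWithin_eq_iteratedDeriv hunique (hcd.of_le (by exact_mod_cast le_top)).contDiffAt hx]
  rw [iteratedDeriv_exp_const_mul]
  simp only [pow_zero, mul_one, norm_mul, norm_pow, Real.norm_eq_abs, Real.abs_exp]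
  have hx' : -1 < x := hx
  calc |(-1/4:ℝ)| ^ n * Real.exp (-1/4 * x) ≤ 1 * Real.exp 1 := by
        gcongr
        · exact pow_le_one₀ (by positivity) (by rw [abs_le]; norm_num)
        · linarith
    _ = _ := by ring

lemma sqrtM_temperate : sqrtM.HasTemperateGrowth := by
  have : sqrtM = fun ξ => (2 * π) ^ (-(3 : ℝ) / 4) * Real.exp (-‖ξ‖ ^ 2 / 4) := by
    ext ξ; exact sqrtM_eq ξ
  rw [this]
  exact (Function.HasTemperateGrowth.const _).mul gauss_temperate

lemma jap_rpow_temperate (r : ℝ) : (fun ξ : E3 => jap ξ ^ r).HasTemperateGrowth := by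
  have := Function.hasTemperateGrowth_one_add_norm_sq_rpow E3 (r / 2)
  have h2 : (fun ξ : E3 => jap ξ ^ r) = fun ξ : E3 => (1 + ‖ξ‖ ^ 2) ^ (r / 2) := by
    funext ξ
    rw [jap, Real.sqrt_eq_rpow, ← Real.rpow_mul (by positivity)]
    congr 1; ring
  rw [h2]; exact this

def co (i : Fin 3) : E3 →L[ℝ] ℝ := EuclideanSpace.proj i

lemma coord_temperate (i : Fin 3) : (fun ξ : E3 => ξ i).HasTemperateGrowth :=
  (co i).hasTemperateGrowth

/-- multiplication by a function of `ξ` -/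
def mulT (g : E3 → ℝ) : SS →ₗ[ℝ] SS :=
  (SchwartzMap.smulLeftCLM ℝ (fun z : E3 × E3 => g z.2)).toLinearMap

lemma snd_temperate {g : E3 → ℝ} (hg : g.HasTemperateGrowth) :
    (fun z : E3 × E3 => g z.2).HasTemperateGrowth :=
  hg.comp (ContinuousLinearMap.snd ℝ E3 E3).hasTemperateGrowth

lemma mulT_apply {g : E3 → ℝ} (hg : g.HasTemperateGrowth) (h : SS) (z : E3 × E3) :
    mulT g h z = g z.2 * h z := by
  have := SchwartzMap.smulLeftCLM_apply_apply (F := ℝ) (snd_temperate hg) h z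
  exact this

end

noncomputable section
set_option linter.unusedSectionVars false
open scoped LineDeriv SchwartzMap ContDiff

lemma schwartz_decay {F : Type*} [NormedAddCommGroup F] [NormedSpace ℝ F]
    (f : SchwartzMap (E3 × E3) F) (n : ℕ) :
    ∃ C, 0 ≤ C ∧ ∀ z, ‖f z‖ ≤ C * ((1 + ‖z‖) ^ n)⁻¹ := by
  refine ⟨2 ^ n * ((Finset.Iic (n, 0)).sup (fun m => SchwartzMap.seminorm ℝ m.1 m.2)) f,
    by positivity, fun z => ?_⟩
  have := SchwartzMap.one_add_le_sup_seminorm_apply (𝕜 := ℝ) (m := (n, 0)) (k := n) (n := 0)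
    le_rfl le_rfl f z
  rw [norm_iteratedFDeriv_zero] at this
  rw [← div_eq_mul_inv, le_div_iff₀ (by positivity)]
  linarith

section TT
variable {W : Type*} [NormedAddCommGroup W] [NormedSpace ℝ W] [MeasureSpace W]
  [OpensMeasurableSpace W] [SecondCountableTopology W]

structure KerOK (κ : W → ℝ) (ι : W →L[ℝ] E3 × E3) : Prop where
  meas : AEStronglyMeasurable κ volume
  bd : ∀ w, ‖w‖ ≤ ‖ι w‖
  int : ∃ n : ℕ, Integrable (fun w => κ w * ((1 + ‖w‖) ^ n)⁻¹) volume

def TT (κ : W → ℝ) (ι : W →L[ℝ] E3 × E3) (h : SS) (z : E3 × E3) : ℝ :=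
  ∫ w, κ w * h (z - ι w)

lemma peetre {V : Type*} [NormedAddCommGroup V] (a b : V) : 1 + ‖a‖ ≤ (1 + ‖b‖) * (1 + ‖b - a‖) := by
  have h1 : ‖a‖ ≤ ‖b‖ + ‖b - a‖ := by
    have := norm_sub_le b (b - a); simpa using this
  nlinarith [norm_nonneg b, norm_nonneg (b - a)]

lemma transl_decay {ι : W →L[ℝ] E3 × E3} (hb : ∀ w, ‖w‖ ≤ ‖ι w‖)
    {F : Type*} [NormedAddCommGroup F] [NormedSpace ℝ F]
    (f : SchwartzMap (E3 × E3) F) (n : ℕ) :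
    ∃ C, 0 ≤ C ∧ ∀ z w, ‖f (z - ι w)‖ ≤ C * (1 + ‖z‖) ^ n * ((1 + ‖w‖) ^ n)⁻¹ := by
  obtain ⟨C, hC, h⟩ := schwartz_decay f n
  refine ⟨C, hC, fun z w => (h _).trans ?_⟩
  rw [mul_assoc]
  gcongr
  rw [← div_eq_mul_inv, inv_le_comm₀ (by positivity) (by positivity), inv_div,
    div_le_iff₀ (by positivity), ← mul_pow]
  gcongr
  calc 1 + ‖w‖ ≤ 1 + ‖ι w‖ := by gcongr; exact hb w
    _ ≤ (1 + ‖z‖) * (1 + ‖z - ι w‖) := peetre _ _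
    _ = _ := by ring

variable {κ : W → ℝ} {ι : W →L[ℝ] E3 × E3}

lemma TT_integrable_gen (hk : KerOK κ ι) {F : Type*} [NormedAddCommGroup F] [NormedSpace ℝ F]
    (f : SchwartzMap (E3 × E3) F) (z : E3 × E3) :
    Integrable (fun w => κ w • f (z - ι w)) := by
  obtain ⟨n, hn⟩ := hk.int
  obtain ⟨C, hC, h⟩ := transl_decay hk.bd f n
  refine (hn.norm.const_mul (C * (1 + ‖z‖) ^ n)).mono' ?_ ?_
  · apply hk.meas.smul
    exact (f.continuous.comp (by fun_prop)).aestronglyMeasurable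
  · filter_upwards with w
    rw [norm_smul, norm_mul, norm_inv, norm_pow]
    have := h z w
    have e : ‖1 + ‖w‖‖ = 1 + ‖w‖ := by rw [Real.norm_of_nonneg (by positivity)]
    rw [e]
    calc ‖κ w‖ * ‖f (z - ι w)‖ ≤ ‖κ w‖ * (C * (1 + ‖z‖) ^ n * ((1 + ‖w‖) ^ n)⁻¹) := by gcongr
      _ = _ := by ring

lemma TT_integrable (hk : KerOK κ ι) (h : SS) (z : E3 × E3) :
    Integrable (fun w => κ w * h (z - ι w)) := TT_integrable_gen hk h z

lemma TT_hasFDerivAt (hk : KerOK κ ι) (h : SS) (z : E3 × E3) :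
    HasFDerivAt (TT κ ι h) (∫ w, κ w • fderiv ℝ h (z - ι w)) z := by
  obtain ⟨n, hn⟩ := hk.int
  obtain ⟨C, hC, hb⟩ := transl_decay hk.bd (SchwartzMap.fderivCLM ℝ (E3 × E3) ℝ h) n
  refine hasFDerivAt_integral_of_dominated_of_fderiv_le (s := Metric.ball z 1)
    (F := fun z w => κ w * h (z - ι w)) (F' := fun z w => κ w • fderiv ℝ h (z - ι w))
    (bound := fun w => C * (2 + ‖z‖) ^ n * ‖κ w * ((1 + ‖w‖) ^ n)⁻¹‖)
    (Metric.ball_mem_nhds z one_pos) ?_ (TT_integrable hk h z) ?_ ?_ (hn.norm.const_mul _) ?_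
  · exact Filter.Eventually.of_forall fun y => (TT_integrable hk h y).aestronglyMeasurable
  · exact (TT_integrable_gen hk (SchwartzMap.fderivCLM ℝ (E3 × E3) ℝ h) z).aestronglyMeasurable
  · filter_upwards with w y hy
    have := hb y w
    rw [SchwartzMap.fderivCLM_apply] at this
    have e : ‖1 + ‖w‖‖ = 1 + ‖w‖ := by rw [Real.norm_of_nonneg (by positivity)]
    rw [norm_smul, norm_mul, norm_inv, norm_pow, e]
    have hy1 : 1 + ‖y‖ ≤ 2 + ‖z‖ := by
      have h1 : ‖y - z‖ < 1 := by simpa [dist_eq_norm] using hy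
      have h2 := norm_le_norm_add_norm_sub' y z
      linarith
    calc _ ≤ ‖κ w‖ * (C * (1 + ‖y‖) ^ n * ((1 + ‖w‖) ^ n)⁻¹) := by gcongr
      _ ≤ ‖κ w‖ * (C * (2 + ‖z‖) ^ n * ((1 + ‖w‖) ^ n)⁻¹) := by gcongr
      _ = _ := by ring
  · filter_upwards with w y hy
    have h1 : HasFDerivAt (fun y => h (y - ι w)) (fderiv ℝ h (y - ι w)) y := by
      have := (h.hasFDerivAt (y - ι w)).comp y ((hasFDerivAt_id y).sub_const (ι w))
      rw [ContinuousLinearMap.comp_id] at this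
      exact this
    exact h1.const_mul (κ w)

lemma TT_fderiv (hk : KerOK κ ι) (h : SS) (z m : E3 × E3) :
    fderiv ℝ (TT κ ι h) z m = TT κ ι (dm m h) z := by
  have hi : Integrable (fun w => κ w • fderiv ℝ h (z - ι w)) :=
    TT_integrable_gen hk (SchwartzMap.fderivCLM ℝ (E3 × E3) ℝ h) z
  rw [(TT_hasFDerivAt hk h z).fderiv, ContinuousLinearMap.integral_apply hi]
  unfold TT
  congr 1

lemma TT_differentiable (hk : KerOK κ ι) (h : SS) : Differentiable ℝ (TT κ ι h) :=
  fun z => (TT_hasFDerivAt hk h z).differentiableAt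

lemma TT_continuous (hk : KerOK κ ι) (h : SS) : Continuous (TT κ ι h) :=
  (TT_differentiable hk h).continuous

lemma TT_add (hk : KerOK κ ι) (h g : SS) (z : E3 × E3) :
    TT κ ι (h + g) z = TT κ ι h z + TT κ ι g z := by
  unfold TT
  rw [← integral_add (TT_integrable hk h z) (TT_integrable hk g z)]
  congr 1; ext w; simp; ring

lemma TT_smul (c : ℝ) (h : SS) (z : E3 × E3) :
    TT κ ι (c • h) z = c * TT κ ι h z := by
  unfold TT
  rw [← integral_const_mul]
  congr 1; ext w; simp; ring

end TT

/-! kernel integrability -/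

lemma int_pow (n : ℕ) (hn : 4 ≤ n) : Integrable (fun x : E3 => ((1 + ‖x‖) ^ n)⁻¹) := by
  have := integrable_one_add_norm (E := E3) (μ := volume) (r := n) (by
    simp; have : (4:ℝ) ≤ n := by exact_mod_cast hn
    linarith)
  refine this.congr ?_
  filter_upwards with x
  rw [Real.rpow_neg (by positivity), Real.rpow_natCast]

lemma int_sing : Integrable (fun x : E3 => (‖x‖ ^ 2)⁻¹ * ((1 + ‖x‖) ^ 4)⁻¹) := by
  have h := integrable_fun_norm_addHaar (E := E3) (volume)
    (f := fun r : ℝ => (r ^ 2)⁻¹ * ((1 + r) ^ 4)⁻¹)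
  rw [h]
  have h1 : IntegrableOn (fun r : ℝ => ((1 + ‖r‖) ^ (-(4:ℝ)))) (Set.Ioi 0) :=
    (integrable_one_add_norm (E := ℝ) (μ := volume) (r := 4) (by simp)).integrableOn
  refine h1.congr_fun ?_ measurableSet_Ioi
  intro r hr
  have hr' : (0:ℝ) < r := hr
  simp only [finrank_euclideanSpace, Fintype.card_fin, smul_eq_mul]
  rw [Real.norm_of_nonneg hr'.le, Real.rpow_neg (by positivity)]
  norm_num
  field_simp

lemma rpow_neg_le {a r : ℝ} (ha : 0 < a) (ha2 : a ≤ 2) (hr : 0 ≤ r) :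
    r ^ (-a) ≤ 1 + (r ^ 2)⁻¹ := by
  rcases hr.eq_or_lt with rfl | hr
  · rw [Real.zero_rpow (by linarith)]; positivity
  rcases le_total 1 r with h | h
  · have := Real.rpow_le_one_of_one_le_of_nonpos h (by linarith : -a ≤ 0)
    have : 0 ≤ (r ^ 2)⁻¹ := by positivity
    linarith
  · have : r ^ (-a) ≤ r ^ (-(2:ℝ)) := Real.rpow_le_rpow_of_exponent_ge hr h (by linarith)
    rw [Real.rpow_neg hr.le 2] at this
    norm_num at this
    linarith

lemma int_ker (a : ℝ) (ha : 0 < a) (ha2 : a ≤ 2) :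
    Integrable (fun x : E3 => ‖x‖ ^ (-a) * ((1 + ‖x‖) ^ 4)⁻¹) := by
  refine ((int_pow 4 le_rfl).add int_sing).mono' ?_ ?_
  · exact Measurable.aestronglyMeasurable (by fun_prop)
  · filter_upwards with x
    have := rpow_neg_le ha ha2 (norm_nonneg x)
    rw [Real.norm_of_nonneg (by positivity)]
    calc _ ≤ (1 + (‖x‖ ^ 2)⁻¹) * ((1 + ‖x‖) ^ 4)⁻¹ := by gcongr
      _ = _ := by simp; ring

/-- the uniform bound on singular convolutions -/
lemma conv_bound (a : ℝ) (ha : 0 < a) (ha2 : a ≤ 2) :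
    ∃ C, 0 < C ∧ ∀ ξ : E3, Integrable (fun η : E3 => ‖η‖ ^ (-a) * ((1 + ‖ξ - η‖) ^ 8)⁻¹) ∧
      ∫ η : E3, ‖η‖ ^ (-a) * ((1 + ‖ξ - η‖) ^ 8)⁻¹ ≤ C * (1 + ‖ξ‖) ^ (-a) := by
  set I1 := ∫ η : E3, (‖η‖ ^ 2)⁻¹ * ((1 + ‖η‖) ^ 4)⁻¹
  set I2 := ∫ η : E3, ((1 + ‖η‖) ^ 6)⁻¹
  have hI1 : 0 ≤ I1 := integral_nonneg fun _ => by positivity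
  have hI2 : 0 ≤ I2 := integral_nonneg fun _ => by positivity
  refine ⟨32 * I1 + 4 * I2 + 1, by positivity, fun ξ => ?_⟩
  have hi2 : Integrable (fun η : E3 => ((1 + ‖ξ - η‖) ^ 6)⁻¹) := (int_pow 6 (by norm_num)).comp_sub_left ξ
  have hdom : Integrable (fun η : E3 =>
      (1 + ‖ξ‖) ^ (-a) * (32 * ((‖η‖ ^ 2)⁻¹ * ((1 + ‖η‖) ^ 4)⁻¹) + 4 * ((1 + ‖ξ - η‖) ^ 6)⁻¹)) :=
    ((int_sing.const_mul 32).add (hi2.const_mul 4)).const_mul _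
  have hle : ∀ η : E3, ‖η‖ ^ (-a) * ((1 + ‖ξ - η‖) ^ 8)⁻¹ ≤
      (1 + ‖ξ‖) ^ (-a) * (32 * ((‖η‖ ^ 2)⁻¹ * ((1 + ‖η‖) ^ 4)⁻¹) + 4 * ((1 + ‖ξ - η‖) ^ 6)⁻¹) := by
    intro η
    rcases eq_or_ne η 0 with rfl | hη
    · rw [norm_zero, Real.zero_rpow (by linarith)]; simp; positivity
    have hn : 0 < ‖η‖ := norm_pos_iff.2 hη
    rw [Real.rpow_neg (by positivity : (0:ℝ) ≤ 1 + ‖ξ‖), inv_mul_eq_div, le_div_iff₀ (by positivity)]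
    have hp : 1 + ‖ξ‖ ≤ (1 + ‖η‖) * (1 + ‖ξ - η‖) := by
      have := peetre ξ η; rwa [norm_sub_rev] at this
    have h1 : (1 + ‖ξ‖) ^ a ≤ (1 + ‖η‖) ^ a * (1 + ‖ξ - η‖) ^ a := by
      rw [← Real.mul_rpow (by positivity) (by positivity)]
      gcongr
    have h2 : (1 + ‖ξ - η‖) ^ a ≤ (1 + ‖ξ - η‖) ^ 2 := by
      rw [← Real.rpow_natCast]
      exact Real.rpow_le_rpow_of_exponent_le (by simp) (by simpa using ha2)
    have h3 : ‖η‖ ^ (-a) * (1 + ‖η‖) ^ a ≤ 2 + 2 * (‖η‖ ^ 2)⁻¹ := by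
      have e : ‖η‖ ^ (-a) * (1 + ‖η‖) ^ a = (1 + ‖η‖⁻¹) ^ a := by
        rw [Real.rpow_neg hn.le, ← Real.inv_rpow hn.le, ← Real.mul_rpow (by positivity) (by positivity)]
        congr 1; field_simp; ring
      rw [e]
      calc (1 + ‖η‖⁻¹) ^ a ≤ (1 + ‖η‖⁻¹) ^ (2:ℝ) :=
            Real.rpow_le_rpow_of_exponent_le (by simp) ha2
        _ = (1 + ‖η‖⁻¹) ^ 2 := by norm_num
        _ ≤ 2 + 2 * (‖η‖ ^ 2)⁻¹ := by
          rw [← inv_pow]; nlinarith [sq_nonneg (1 - ‖η‖⁻¹)]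
    set g := 1 + ‖ξ - η‖ with hg
    have hg1 : 1 ≤ g := by simp [hg]
    have h4 : (‖η‖ ^ 2)⁻¹ * (g ^ 6)⁻¹ ≤ 16 * ((‖η‖ ^ 2)⁻¹ * ((1 + ‖η‖) ^ 4)⁻¹) + (g ^ 6)⁻¹ := by
      have hgi : (g ^ 6)⁻¹ ≤ 1 := inv_le_one_of_one_le₀ (one_le_pow₀ hg1)
      have hgp : 0 < (g ^ 6)⁻¹ := by positivity
      rcases le_total ‖η‖ 1 with h | h
      · have : (1:ℝ) ≤ 16 * ((1 + ‖η‖) ^ 4)⁻¹ := by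
          rw [← div_eq_mul_inv, le_div_iff₀ (by positivity)]
          calc 1 * (1 + ‖η‖) ^ 4 ≤ 1 * (1 + 1) ^ 4 := by gcongr
            _ = 16 := by norm_num
        calc _ ≤ (‖η‖ ^ 2)⁻¹ * (16 * ((1 + ‖η‖) ^ 4)⁻¹) := by gcongr; linarith
          _ ≤ _ := by nlinarith
      · have : (‖η‖ ^ 2)⁻¹ ≤ 1 := inv_le_one_of_one_le₀ (one_le_pow₀ h)
        calc _ ≤ 1 * (g ^ 6)⁻¹ := by gcongr
          _ ≤ _ := by rw [one_mul]; have : 0 ≤ 16 * ((‖η‖ ^ 2)⁻¹ * ((1 + ‖η‖) ^ 4)⁻¹) := by positivity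
                      linarith
    calc ‖η‖ ^ (-a) * (g ^ 8)⁻¹ * (1 + ‖ξ‖) ^ a
        ≤ ‖η‖ ^ (-a) * (g ^ 8)⁻¹ * ((1 + ‖η‖) ^ a * g ^ 2) := by
          gcongr
          exact h1.trans (by gcongr)
      _ = (‖η‖ ^ (-a) * (1 + ‖η‖) ^ a) * (g ^ 6)⁻¹ := by field_simp
      _ ≤ (2 + 2 * (‖η‖ ^ 2)⁻¹) * (g ^ 6)⁻¹ := by gcongr
      _ ≤ _ := by linarith
  have hInt8 : Integrable (fun η : E3 => ‖η‖ ^ (-a) * ((1 + ‖ξ - η‖) ^ 8)⁻¹) := by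
    refine hdom.mono' (Measurable.aestronglyMeasurable (by fun_prop)) ?_
    filter_upwards with η
    rw [Real.norm_of_nonneg (by positivity)]
    exact hle η
  refine ⟨hInt8, (integral_mono hInt8 hdom hle).trans ?_⟩
  rw [integral_const_mul, integral_add (int_sing.const_mul 32) (hi2.const_mul 4),
    integral_const_mul, integral_const_mul]
  have e : ∫ η : E3, ((1 + ‖ξ - η‖) ^ 6)⁻¹ = I2 :=
    integral_sub_left_eq_self (fun η : E3 => ((1 + ‖η‖) ^ 6)⁻¹) volume ξ
  rw [e, mul_comm]
  have : 0 ≤ (1 + ‖ξ‖) ^ (-a) := by positivity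
  exact mul_le_mul_of_nonneg_right (by linarith) this

end

noncomputable section
set_option linter.unusedSectionVars false
open scoped LineDeriv SchwartzMap ContDiff ENNReal

instance inst_haar : (volume : Measure (E3 × E3)).IsAddHaarMeasure := by
  rw [Measure.volume_eq_prod]; infer_instance

instance inst_neg : (volume : Measure (E3 × E3)).IsNegInvariant := by
  have : (volume : Measure (E3 × E3)).Regular := by infer_instance
  infer_instance

lemma coord_le (η : E3) (i : Fin 3) : |η i| ≤ ‖η‖ := by
  have := PiLp.norm_apply_le η i; simpa using this

lemma Bij_le (γ : ℝ) (i j : Fin 3) (η : E3) : |Bij γ i j η| ≤ 2 * ‖η‖ ^ (γ + 2) := by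
  unfold Bij
  rw [abs_mul, abs_of_nonneg (by positivity : 0 ≤ ‖η‖ ^ (γ + 2))]
  gcongr
  have h1 : |η i * η j / ‖η‖ ^ 2| ≤ 1 := by
    rw [abs_div, abs_mul, abs_of_nonneg (by positivity : 0 ≤ ‖η‖ ^ 2)]
    apply div_le_one_of_le₀ _ (by positivity)
    rw [sq]
    exact mul_le_mul (coord_le _ _) (coord_le _ _) (abs_nonneg _) (norm_nonneg _)
  have h2 : |(if i = j then (1:ℝ) else 0)| ≤ 1 := by split_ifs <;> simp
  calc _ ≤ |(if i = j then (1:ℝ) else 0)| + |η i * η j / ‖η‖ ^ 2| := abs_sub _ _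
    _ ≤ 2 := by linarith

lemma Bij_symm (γ : ℝ) (i j : Fin 3) : Bij γ i j = Bij γ j i := by
  ext η; unfold Bij
  rw [mul_comm (η i)]
  congr 2
  simp only [eq_comm]

lemma Bij_kernel (γ : ℝ) (i : Fin 3) (η : E3) : ∑ j, Bij γ i j η * η j = 0 := by
  unfold Bij
  rcases eq_or_ne η 0 with rfl | hη
  · simp
  have hn : ‖η‖ ^ 2 ≠ 0 := by simpa using hη
  have e : ‖η‖ ^ 2 = ∑ j, η j * η j := by
    rw [EuclideanSpace.norm_sq_eq]; simp [sq]
  have : ∀ j, ((if i = j then (1 : ℝ) else 0) - η i * η j / ‖η‖ ^ 2) * ‖η‖ ^ (γ + 2) * η j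
      = ‖η‖ ^ (γ + 2) * ((if i = j then η j else 0) - (η i / ‖η‖ ^ 2) * (η j * η j)) := by
    intro j; split_ifs <;> ring
  simp_rw [this]
  rw [← Finset.mul_sum, Finset.sum_sub_distrib, ← Finset.mul_sum, ← e]
  simp
  right
  field_simp; ring

lemma Bij_meas (γ : ℝ) (i j : Fin 3) : Measurable (Bij γ i j) := by
  have : ∀ i : Fin 3, Measurable (fun η : E3 => η i) := fun i => (co i).continuous.measurable
  unfold Bij
  have h1 := this i
  have h2 := this j
  fun_prop

def iv : E3 →L[ℝ] E3 × E3 := ContinuousLinearMap.inr ℝ E3 E3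

lemma iv_apply (η : E3) : iv η = (0, η) := rfl

lemma ker_B (γ : ℝ) (hγ1 : -3 ≤ γ) (hγ2 : γ < -2) (i j : Fin 3) : KerOK (Bij γ i j) iv where
  meas := (Bij_meas γ i j).aestronglyMeasurable
  bd := fun w => by simp [iv_apply]
  int := by
    refine ⟨4, ?_⟩
    refine ((int_ker (-(γ+2)) (by linarith) (by linarith)).const_mul 2).mono' ?_ ?_
    · exact ((Bij_meas γ i j).mul (by fun_prop)).aestronglyMeasurable
    · filter_upwards with w
      rw [norm_mul, norm_inv, norm_pow, Real.norm_of_nonneg (by positivity : 0 ≤ 1 + ‖w‖), neg_neg,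
        ← mul_assoc]
      gcongr
      exact Bij_le γ i j w

abbrev TB (γ : ℝ) (i j : Fin 3) (h : SS) (x ξ : E3) : ℝ := TT (Bij γ i j) iv h (x, ξ)

def kP (w : E3 × E3) : ℝ := -(1 / (4 * π * ‖w.1‖))

def iid : E3 × E3 →L[ℝ] E3 × E3 := ContinuousLinearMap.id ℝ _

lemma kP_meas : Measurable kP := by unfold kP; fun_prop

lemma kP_abs (w : E3 × E3) : ‖kP w‖ ≤ ‖w.1‖ ^ (-(1:ℝ)) := by
  unfold kP
  rw [norm_neg, Real.norm_of_nonneg (by positivity), Real.rpow_neg_one]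
  rcases eq_or_ne ‖w.1‖ 0 with h | h
  · simp [h]
  have : 0 < ‖w.1‖ := by positivity
  rw [one_div]
  gcongr
  nlinarith [Real.pi_gt_three]

lemma prod_pow_le (a b : E3) : ((1 + ‖(a, b)‖) ^ 8)⁻¹ ≤ ((1 + ‖a‖) ^ 4)⁻¹ * ((1 + ‖b‖) ^ 4)⁻¹ := by
  rw [← mul_inv]
  gcongr
  calc (1 + ‖a‖) ^ 4 * (1 + ‖b‖) ^ 4 ≤ (1 + ‖(a, b)‖) ^ 4 * (1 + ‖(a, b)‖) ^ 4 := by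
        gcongr
        · exact norm_fst_le (a, b)
        · exact norm_snd_le (a, b)
    _ = _ := by ring

lemma ker_P : KerOK kP iid where
  meas := kP_meas.aestronglyMeasurable
  bd := fun w => le_rfl
  int := by
    refine ⟨8, ?_⟩
    refine ((int_ker 1 one_pos (by norm_num)).mul_prod (int_pow 4 le_rfl)).mono' ?_ ?_
    · exact (kP_meas.mul (by fun_prop)).aestronglyMeasurable
    · filter_upwards with w
      rw [norm_mul, norm_inv, norm_pow, Real.norm_of_nonneg (by positivity : 0 ≤ 1 + ‖w‖)]
      calc _ ≤ ‖w.1‖ ^ (-(1:ℝ)) * (((1 + ‖w.1‖) ^ 4)⁻¹ * ((1 + ‖w.2‖) ^ 4)⁻¹) := by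
            gcongr
            · exact kP_abs w
            · exact prod_pow_le w.1 w.2
        _ = _ := by ring

def LP (h : SS) (x : E3) : ℝ := TT kP iid h (x, 0)

lemma LP_hasFDerivAt (h : SS) (x : E3) :
    HasFDerivAt (LP h) ((fderiv ℝ (TT kP iid h) (x, 0)).comp (ContinuousLinearMap.inl ℝ E3 E3)) x := by
  have := ((TT_differentiable ker_P h) (x, 0)).hasFDerivAt.comp x
    (hasFDerivAt_prodMk_left (𝕜 := ℝ) x (0 : E3))
  exact this

lemma LP_differentiable (h : SS) : Differentiable ℝ (LP h) :=
  fun x => (LP_hasFDerivAt h x).differentiableAt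

lemma pd_LP (i : Fin 3) (h : SS) : pd i (LP h) = LP (dx i h) := by
  ext x
  unfold pd
  rw [(LP_hasFDerivAt h x).fderiv]
  exact TT_fderiv ker_P h (x, 0) (ex i)

lemma int_dm (m : E3 × E3) (h : SS) : ∫ w, dm m h w = 0 := by
  have e : ∀ w, dm m h w = 1 * fderiv ℝ h w m := fun w => by rw [dm_apply, one_mul]
  have hi : Integrable (fun w => fderiv ℝ h w m) := by
    refine (dm m h).integrable.congr ?_
    filter_upwards with w using dm_apply m h w
  simp_rw [e]
  rw [integral_mul_fderiv_eq_neg_fderiv_mul_of_integrable (f := fun _ => (1:ℝ))]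
  · simp
  · simp
  · simpa using hi
  · simpa using h.integrable
  · fun_prop
  · intro x _; exact h.differentiableAt

/-- decay estimate for the potential integral -/
lemma LP_bd1 (g : SS) : ∃ C, 0 ≤ C ∧ ∀ x : E3,
    ∫ w : E3 × E3, ‖w.1‖ ^ (-(1:ℝ)) * ((1 + ‖x - w.1‖) * ‖g ((x, 0) - w)‖) ≤ C * (1 + ‖x‖)⁻¹ ∧
    Integrable (fun w : E3 × E3 => ‖w.1‖ ^ (-(1:ℝ)) * ((1 + ‖x - w.1‖) * ‖g ((x, 0) - w)‖)) := by
  obtain ⟨C, hC, hg⟩ := schwartz_decay g 13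
  obtain ⟨C', hC', hI⟩ := conv_bound 1 one_pos (by norm_num)
  set J := ∫ ζ : E3, ((1 + ‖ζ‖) ^ 4)⁻¹
  have hJ : 0 ≤ J := integral_nonneg fun _ => by positivity
  refine ⟨C * (C' * J), by positivity, fun x => ?_⟩
  have hdom : Integrable (fun w : E3 × E3 => C * ((‖w.1‖ ^ (-(1:ℝ)) * ((1 + ‖x - w.1‖) ^ 8)⁻¹) *
      ((1 + ‖w.2‖) ^ 4)⁻¹)) :=
    ((hI x).1.mul_prod (int_pow 4 le_rfl)).const_mul C
  have hle : ∀ w : E3 × E3, ‖w.1‖ ^ (-(1:ℝ)) * ((1 + ‖x - w.1‖) * ‖g ((x, 0) - w)‖) ≤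
      C * ((‖w.1‖ ^ (-(1:ℝ)) * ((1 + ‖x - w.1‖) ^ 8)⁻¹) * ((1 + ‖w.2‖) ^ 4)⁻¹) := by
    rintro ⟨a, b⟩
    have h1 : ‖g ((x, 0) - (a, b))‖ ≤ C * (((1 + ‖x - a‖) ^ 9)⁻¹ * ((1 + ‖b‖) ^ 4)⁻¹) := by
      refine (hg _).trans ?_
      gcongr
      rw [← mul_inv]
      have e : ((x, 0) - (a, b) : E3 × E3) = (x - a, -b) := by simp
      rw [e]
      gcongr
      calc (1 + ‖x - a‖) ^ 9 * (1 + ‖b‖) ^ 4 ≤ (1 + ‖(x - a, -b)‖) ^ 9 * (1 + ‖(x - a, -b)‖) ^ 4 := by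
            gcongr
            · exact norm_fst_le (x - a, -b)
            · have := norm_snd_le (x - a, -b); simpa using this
        _ = _ := by ring
    simp only
    calc _ ≤ ‖a‖ ^ (-(1:ℝ)) * ((1 + ‖x - a‖) * (C * (((1 + ‖x - a‖) ^ 9)⁻¹ * ((1 + ‖b‖) ^ 4)⁻¹))) := by
          gcongr
      _ = _ := by field_simp
  have hInt8 : Integrable (fun w : E3 × E3 => ‖w.1‖ ^ (-(1:ℝ)) * ((1 + ‖x - w.1‖) * ‖g ((x, 0) - w)‖)) := by
    refine hdom.mono' ?_ ?_
    · apply Measurable.aestronglyMeasurable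
      have : Measurable (fun w : E3 × E3 => ‖g ((x, 0) - w)‖) :=
        (g.continuous.comp (by fun_prop)).norm.measurable
      fun_prop
    · filter_upwards with w
      rw [Real.norm_of_nonneg (by positivity)]
      exact hle w
  refine ⟨(integral_mono hInt8 hdom hle).trans ?_, hInt8⟩
  rw [integral_const_mul]
  have := integral_prod_mul (μ := (volume : Measure E3)) (ν := (volume : Measure E3))
    (fun a : E3 => ‖a‖ ^ (-(1:ℝ)) * ((1 + ‖x - a‖) ^ 8)⁻¹) (fun b : E3 => ((1 + ‖b‖) ^ 4)⁻¹)
  rw [Measure.volume_eq_prod, this]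
  have h2 := (hI x).2
  rw [Real.rpow_neg_one] at h2
  calc _ ≤ C * ((C' * (1 + ‖x‖)⁻¹) * J) := by gcongr
    _ = _ := by ring

lemma ae_fst_ne : ∀ᵐ w : E3 × E3, w.1 ≠ 0 := by
  have h : ∀ᵐ a : E3, a ≠ 0 := by
    rw [ae_iff]; simp
  exact Measure.quasiMeasurePreserving_fst.ae h

lemma LP_decay (m : E3 × E3) (h : SS) : ∃ C, 0 ≤ C ∧ ∀ x : E3, |LP (dm m h) x| ≤ C * ((1 + ‖x‖) ^ 2)⁻¹ := by
  set g := dm m h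
  obtain ⟨C, hC, hb⟩ := LP_bd1 g
  refine ⟨2 * C, by positivity, fun x => ?_⟩
  obtain ⟨hb1, hi⟩ := hb x
  have hi0 : Integrable (fun w => kP w * g ((x, 0) - w)) := TT_integrable ker_P g (x, 0)
  have A1 : |LP g x| ≤ C * (1 + ‖x‖)⁻¹ := by
    refine le_trans ?_ hb1
    unfold LP TT
    rw [← Real.norm_eq_abs]
    refine (norm_integral_le_integral_norm _).trans (integral_mono hi0.norm hi fun w => ?_)
    simp only [norm_mul]
    have h1 := kP_abs w
    have : 1 ≤ 1 + ‖x - w.1‖ := by simp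
    gcongr
    show ‖g ((x, 0) - w)‖ ≤ _
    nlinarith [norm_nonneg (g ((x, 0) - w))]
  have A2 : ‖x‖ * |LP g x| ≤ C * (1 + ‖x‖)⁻¹ := by
    have hz : ∫ w, g ((x, 0) - w) = 0 := by
      rw [integral_sub_left_eq_self (fun w => g w) volume (x, 0)]; exact int_dm m h
    have hig : Integrable (fun w => g ((x, 0) - w)) := g.integrable.comp_sub_left (x, 0)
    have e : ‖x‖ * LP g x = ∫ w, (‖x‖ * kP w + 1 / (4 * π)) * g ((x, 0) - w) := by
      have e1 : ∀ w, (‖x‖ * kP w + 1 / (4 * π)) * g ((x, 0) - w) =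
        ‖x‖ * (kP w * g ((x, 0) - w)) + 1 / (4 * π) * g ((x, 0) - w) := fun w => by ring
      simp_rw [e1]
      rw [integral_add (hi0.const_mul _) (hig.const_mul _), integral_const_mul, integral_const_mul, hz]
      unfold LP TT
      simp [iid]
    have e2 : ‖x‖ * |LP g x| = ‖‖x‖ * LP g x‖ := by simp
    rw [e2, e]
    refine le_trans ?_ hb1
    refine (norm_integral_le_integral_norm _).trans (integral_mono_of_nonneg ?_ hi ?_)
    · filter_upwards with w using norm_nonneg _
    · filter_upwards [ae_fst_ne] with w hw
      have hw' : 0 < ‖w.1‖ := norm_pos_iff.2 hw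
      simp only [norm_mul]
      rw [← mul_assoc]
      gcongr
      have : ‖x‖ * kP w + 1 / (4 * π) = (1 / (4 * π)) * (‖w.1‖⁻¹ * (‖w.1‖ - ‖x‖)) := by
        unfold kP; field_simp; ring
      rw [this, norm_mul, norm_mul, Real.rpow_neg_one, norm_inv, norm_norm]
      have h1 : ‖(‖w.1‖ - ‖x‖)‖ ≤ ‖x - w.1‖ := by
        rw [norm_sub_rev x]; exact abs_norm_sub_norm_le _ _
      have h2 : ‖1 / (4 * π)‖ ≤ 1 := by
        rw [Real.norm_of_nonneg (by positivity), div_le_one (by positivity)]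
        nlinarith [Real.pi_gt_three]
      calc _ ≤ 1 * (‖w.1‖⁻¹ * ‖x - w.1‖) := by gcongr
        _ ≤ _ := by rw [one_mul]; gcongr; linarith
  rw [← div_eq_mul_inv, le_div_iff₀ (by positivity)]
  have hx : 0 < 1 + ‖x‖ := by positivity
  have A3 : |LP g x| * (1 + ‖x‖) ≤ 2 * C * (1 + ‖x‖)⁻¹ := by linarith
  calc |LP g x| * (1 + ‖x‖) ^ 2 = |LP g x| * (1 + ‖x‖) * (1 + ‖x‖) := by ring
    _ ≤ 2 * C * (1 + ‖x‖)⁻¹ * (1 + ‖x‖) := by gcongr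
    _ = 2 * C := by field_simp

lemma LP_sq_integrable (m : E3 × E3) (h : SS) : Integrable (fun x => (LP (dm m h) x) ^ 2) := by
  obtain ⟨C, hC, hb⟩ := LP_decay m h
  refine ((int_pow 4 le_rfl).const_mul (C ^ 2)).mono' ?_ ?_
  · exact ((LP_differentiable _).continuous.pow 2).aestronglyMeasurable
  · filter_upwards with x
    rw [norm_pow, Real.norm_eq_abs]
    calc _ ≤ (C * ((1 + ‖x‖) ^ 2)⁻¹) ^ 2 := by gcongr; exact hb x
      _ = _ := by field_simp

/-! Collision kernel pointwise estimate -/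

lemma lint_cs {α : Type*} [MeasurableSpace α] {μ : Measure α} {f g : α → ℝ≥0∞}
    (hf : AEMeasurable f μ) (hg : AEMeasurable g μ) :
    (∫⁻ a, f a * g a ∂μ) ^ 2 ≤ (∫⁻ a, f a ^ 2 ∂μ) * ∫⁻ a, g a ^ 2 ∂μ := by
  have := ENNReal.lintegral_mul_le_Lp_mul_Lq μ (Real.HolderConjugate.two_two) hf hg
  calc _ ≤ ((∫⁻ a, f a ^ (2:ℝ) ∂μ) ^ (1 / (2:ℝ)) * (∫⁻ a, g a ^ (2:ℝ) ∂μ) ^ (1 / (2:ℝ))) ^ 2 := by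
        gcongr; exact this
    _ = _ := by
        rw [mul_pow, ← ENNReal.rpow_natCast, ← ENNReal.rpow_natCast, ← ENNReal.rpow_mul,
          ← ENNReal.rpow_mul]
        simp

lemma jap_pos (ξ : E3) : 0 < jap ξ := by unfold jap; positivity
lemma one_le_jap (ξ : E3) : 1 ≤ jap ξ := by
  unfold jap; rw [Real.one_le_sqrt]; simp
lemma jap_le (ξ : E3) : jap ξ ≤ 1 + ‖ξ‖ := by
  unfold jap; rw [Real.sqrt_le_left (by positivity)]; nlinarith [norm_nonneg ξ]
lemma norm_le_jap (ξ : E3) : ‖ξ‖ ≤ jap ξ := by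
  unfold jap; apply Real.le_sqrt_of_sq_le; linarith

lemma TB_bound (γ : ℝ) (hγ1 : -3 ≤ γ) (hγ2 : γ < -2) (i j : Fin 3) (g : E3 → ℝ)
    (hg : g.HasTemperateGrowth) (K : ℝ) (hK : ∀ ξ, |g ξ| ≤ K * ((1 + ‖ξ‖) ^ 4)⁻¹) :
    ∃ C : ℝ, 0 ≤ C ∧ ∀ (h : SS) (x ξ : E3),
      ‖jap ξ ^ (-(γ + 2)) * TB γ i j (mulT g h) x ξ‖ₑ ^ 2 ≤
        ENNReal.ofReal C * ∫⁻ η, ‖h (x, η)‖ₑ ^ 2 := by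
  obtain ⟨C, hC, hI⟩ := conv_bound (-(2 * (γ + 2))) (by linarith) (by linarith)
  refine ⟨4 * K ^ 2 * C, by positivity, fun h x ξ => ?_⟩
  have hmg : Measurable g := hg.1.continuous.measurable
  have hmh : Measurable (fun η : E3 => h (x, ξ - η)) := (h.continuous.comp (by fun_prop)).measurable
  have s1 : ‖TB γ i j (mulT g h) x ξ‖ₑ ≤
      ∫⁻ η, ‖Bij γ i j η * g (ξ - η)‖ₑ * ‖h (x, ξ - η)‖ₑ := by
    refine (enorm_integral_le_lintegral_enorm _).trans (le_of_eq ?_)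
    congr 1; ext η
    rw [mulT_apply hg, iv_apply]
    simp [enorm_mul, mul_assoc]
  have s2 : ‖TB γ i j (mulT g h) x ξ‖ₑ ^ 2 ≤
      (∫⁻ η, ‖Bij γ i j η * g (ξ - η)‖ₑ ^ 2) * ∫⁻ η, ‖h (x, ξ - η)‖ₑ ^ 2 := by
    refine le_trans (by gcongr) (lint_cs ?_ ?_)
    · exact (((Bij_meas γ i j).mul (hmg.comp (by fun_prop))).enorm).aemeasurable
    · exact hmh.enorm.aemeasurable
  have s3 : ∫⁻ η, ‖h (x, ξ - η)‖ₑ ^ 2 = ∫⁻ η, ‖h (x, η)‖ₑ ^ 2 :=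
    lintegral_sub_left_eq_self (fun η => ‖h (x, η)‖ₑ ^ 2) ξ
  have s4 : (∫⁻ η, ‖Bij γ i j η * g (ξ - η)‖ₑ ^ 2) ≤
      ENNReal.ofReal (4 * K ^ 2 * C * (1 + ‖ξ‖) ^ (2 * (γ + 2))) := by
    have t1 : ∀ η, ‖Bij γ i j η * g (ξ - η)‖ₑ ^ 2 ≤
        ENNReal.ofReal (4 * K ^ 2 * (‖η‖ ^ (-(-(2 * (γ + 2)))) * ((1 + ‖ξ - η‖) ^ 8)⁻¹)) := by
      intro η
      rw [← ofReal_norm, ← ENNReal.ofReal_pow (norm_nonneg _)]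
      apply ENNReal.ofReal_le_ofReal
      rw [norm_mul, Real.norm_eq_abs, Real.norm_eq_abs, neg_neg]
      calc _ ≤ ((2 * ‖η‖ ^ (γ + 2)) * (K * ((1 + ‖ξ - η‖) ^ 4)⁻¹)) ^ 2 := by
            gcongr
            · exact Bij_le γ i j η
            · exact hK _
        _ = _ := by
            rw [mul_comm 2 (γ + 2), Real.rpow_mul (norm_nonneg _)]
            norm_num
            field_simp; ring
    refine (lintegral_mono t1).trans ?_
    rw [← ofReal_integral_eq_lintegral_ofReal ((hI ξ).1.const_mul _)
      (by filter_upwards with η; positivity), integral_const_mul]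
    apply ENNReal.ofReal_le_ofReal
    have := (hI ξ).2
    rw [neg_neg] at this ⊢
    calc _ ≤ 4 * K ^ 2 * (C * (1 + ‖ξ‖) ^ (2 * (γ + 2))) := by gcongr
      _ = _ := by ring
  rw [enorm_mul, mul_pow]
  calc _ ≤ ‖jap ξ ^ (-(γ + 2))‖ₑ ^ 2 * ((ENNReal.ofReal (4 * K ^ 2 * C * (1 + ‖ξ‖) ^ (2 * (γ + 2)))) *
        ∫⁻ η, ‖h (x, η)‖ₑ ^ 2) := by
        gcongr
        refine s2.trans ?_
        rw [s3]
        gcongr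
    _ = (‖jap ξ ^ (-(γ + 2))‖ₑ ^ 2 * (ENNReal.ofReal (4 * K ^ 2 * C * (1 + ‖ξ‖) ^ (2 * (γ + 2))))) *
        ∫⁻ η, ‖h (x, η)‖ₑ ^ 2 := (mul_assoc _ _ _).symm
    _ ≤ _ := by
        gcongr
        have hj := jap_pos ξ
        rw [← ofReal_norm, ← ENNReal.ofReal_pow (norm_nonneg _), ← ENNReal.ofReal_mul (by positivity)]
        apply ENNReal.ofReal_le_ofReal
        rw [Real.norm_of_nonneg (by positivity)]
        have e1 : (jap ξ ^ (-(γ + 2))) ^ 2 = jap ξ ^ (-(2 * (γ + 2))) := by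
          rw [← Real.rpow_natCast, ← Real.rpow_mul hj.le]; congr 1; push_cast; ring
        have e2 : (1 + ‖ξ‖) ^ (2 * (γ + 2)) ≤ jap ξ ^ (2 * (γ + 2)) :=
          Real.rpow_le_rpow_of_nonpos hj (jap_le ξ) (by linarith)
        rw [e1]
        calc _ ≤ jap ξ ^ (-(2 * (γ + 2))) * (4 * K ^ 2 * C * jap ξ ^ (2 * (γ + 2))) := by gcongr
          _ = 4 * K ^ 2 * C * (jap ξ ^ (-(2 * (γ + 2))) * jap ξ ^ (2 * (γ + 2))) := by ring
          _ = _ := by rw [← Real.rpow_add hj]; simp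

lemma gauss_bd (ξ : E3) : sqrtM ξ * (1 + ‖ξ‖) ^ 5 ≤ Real.exp 25 * (2 * π) ^ (-(3 : ℝ) / 4) := by
  rw [sqrtM_eq]
  have h1 : (1 + ‖ξ‖) ^ 5 ≤ Real.exp (5 * ‖ξ‖) := by
    have := Real.add_one_le_exp ‖ξ‖
    calc (1 + ‖ξ‖) ^ 5 ≤ (Real.exp ‖ξ‖) ^ 5 := by gcongr; linarith
      _ = _ := by rw [← Real.exp_nat_mul]; norm_num
  calc _ ≤ (2 * π) ^ (-(3 : ℝ) / 4) * Real.exp (-‖ξ‖ ^ 2 / 4) * Real.exp (5 * ‖ξ‖) := by gcongr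
    _ = (2 * π) ^ (-(3 : ℝ) / 4) * Real.exp (-‖ξ‖ ^ 2 / 4 + 5 * ‖ξ‖) := by rw [mul_assoc, ← Real.exp_add]
    _ ≤ (2 * π) ^ (-(3 : ℝ) / 4) * Real.exp 25 := by
        gcongr; nlinarith [sq_nonneg (‖ξ‖ - 10)]
    _ = _ := by ring

lemma sqrtM_pos (ξ : E3) : 0 < sqrtM ξ := by rw [sqrtM_eq]; positivity

/-- sqrtM times a function of linear growth -/
lemma sqrtM_mul_bd (m : E3 → ℝ) (hm : ∀ ξ, |m ξ| ≤ 1 + ‖ξ‖) (ξ : E3) :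
    |sqrtM ξ * m ξ| ≤ (Real.exp 25 * (2 * π) ^ (-(3 : ℝ) / 4)) * ((1 + ‖ξ‖) ^ 4)⁻¹ := by
  rw [← div_eq_mul_inv, le_div_iff₀ (by positivity), abs_mul, abs_of_pos (sqrtM_pos ξ)]
  have h0 := (sqrtM_pos ξ).le
  calc _ ≤ sqrtM ξ * (1 + ‖ξ‖) * (1 + ‖ξ‖) ^ 4 := by gcongr; exact hm ξ
    _ = sqrtM ξ * (1 + ‖ξ‖) ^ 5 := by ring
    _ ≤ _ := gauss_bd ξ

end

noncomputable section
set_option linter.unusedSectionVars false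
open scoped LineDeriv SchwartzMap ContDiff ENNReal

lemma TB_eq (γ : ℝ) (i j : Fin 3) (h : SS) (x ξ : E3) :
    TB γ i j h x ξ = ∫ ξ', Bij γ i j (ξ - ξ') * h (x, ξ') := by
  rw [← integral_sub_left_eq_self (fun ξ' => Bij γ i j (ξ - ξ') * h (x, ξ')) volume ξ]
  unfold TB TT
  simp [iv_apply]

lemma TB_int (γ : ℝ) (hγ1 : -3 ≤ γ) (hγ2 : γ < -2) (i j : Fin 3) (h : SS) (x ξ : E3) :
    Integrable (fun ξ' => Bij γ i j (ξ - ξ') * h (x, ξ')) := by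
  have := (TT_integrable (ker_B γ hγ1 hγ2 i j) h (x, ξ)).comp_sub_left ξ
  simpa [iv_apply] using this

lemma TB_neg_symm (γ : ℝ) (i j : Fin 3) (h : SS) (x ξ : E3) :
    TB γ i j h x ξ = TB γ j i h x ξ := by
  unfold TB; rw [Bij_symm]

def TBL (γ : ℝ) (hγ1 : -3 ≤ γ) (hγ2 : γ < -2) (x ξ : E3) (i j : Fin 3) : SS →ₗ[ℝ] ℝ where
  toFun h := TB γ i j h x ξ
  map_add' h g := TT_add (ker_B γ hγ1 hγ2 i j) h g _
  map_smul' c h := TT_smul c h _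

lemma TB_v (γ : ℝ) (hγ1 : -3 ≤ γ) (hγ2 : γ < -2) (i j : Fin 3) (h : SS) (x ξ : E3) :
    HasFDerivAt (fun ζ => TB γ i j h x ζ)
      ((fderiv ℝ (TT (Bij γ i j) iv h) (x, ξ)).comp (ContinuousLinearMap.inr ℝ E3 E3)) ξ := by
  have := ((TT_differentiable (ker_B γ hγ1 hγ2 i j) h) (x, ξ)).hasFDerivAt.comp ξ
    (hasFDerivAt_prodMk_right (𝕜 := ℝ) x ξ)
  exact this

lemma TB_x (γ : ℝ) (hγ1 : -3 ≤ γ) (hγ2 : γ < -2) (i j : Fin 3) (h : SS) (x ξ : E3) :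
    HasFDerivAt (fun y => TB γ i j h y ξ)
      ((fderiv ℝ (TT (Bij γ i j) iv h) (x, ξ)).comp (ContinuousLinearMap.inl ℝ E3 E3)) x := by
  have := ((TT_differentiable (ker_B γ hγ1 hγ2 i j) h) (x, ξ)).hasFDerivAt.comp x
    (hasFDerivAt_prodMk_left (𝕜 := ℝ) x ξ)
  exact this

lemma Q_inner (γ : ℝ) (hγ1 : -3 ≤ γ) (hγ2 : γ < -2) (i j : Fin 3) (F : SS) (x ξ : E3) :
    pd i (fun ζ => ∫ ξ', Bij γ i j (ζ - ξ') * (uc F x ξ' * pd j (uc F x) ζ - pd j (uc F x) ξ' * uc F x ζ)) ξ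
    = TB γ i j (dv i F) x ξ * dv j F (x, ξ) + TB γ i j F x ξ * dv i (dv j F) (x, ξ)
      - (TB γ i j (dv i (dv j F)) x ξ * F (x, ξ) + TB γ i j (dv j F) x ξ * dv i F (x, ξ)) := by
  have e : (fun ζ => ∫ ξ', Bij γ i j (ζ - ξ') * (uc F x ξ' * pd j (uc F x) ζ - pd j (uc F x) ξ' * uc F x ζ))
      = fun ζ => TB γ i j F x ζ * dv j F (x, ζ) - TB γ i j (dv j F) x ζ * F (x, ζ) := by
    funext ζ
    rw [pd_uc]
    simp only [uc]
    rw [TB_eq, TB_eq, ← integral_mul_const, ← integral_mul_const, ← integral_sub]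
    · congr 1; ext ξ'; ring
    · exact (TB_int γ hγ1 hγ2 i j F x ζ).mul_const _
    · exact (TB_int γ hγ1 hγ2 i j (dv j F) x ζ).mul_const _
  rw [e]
  unfold pd
  have h1 := (TB_v γ hγ1 hγ2 i j F x ξ).fun_mul (slice_v (dv j F) x ξ)
  have h2 := (TB_v γ hγ1 hγ2 i j (dv j F) x ξ).fun_mul (slice_v F x ξ)
  rw [(h1.fun_sub h2).fderiv]
  have t1 : ∀ h : SS, fderiv ℝ (TT (Bij γ i j) iv h) (x, ξ) (0, EuclideanSpace.single i 1) = TB γ i j (dv i h) x ξ :=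
    fun h => TT_fderiv (ker_B γ hγ1 hγ2 i j) h (x, ξ) (ev i)
  have t2 : ∀ h : SS, fderiv ℝ h (x, ξ) (0, EuclideanSpace.single i 1) = dv i h (x, ξ) :=
    fun h => (dm_apply (ev i) h (x, ξ)).symm
  simp only [sub_apply, add_apply, smul_apply,
    ContinuousLinearMap.comp_apply, ContinuousLinearMap.inr_apply, smul_eq_mul, t1, t2]
  ring

lemma Q_formula (γ : ℝ) (hγ1 : -3 ≤ γ) (hγ2 : γ < -2) (F : SS) (x ξ : E3) :
    Qop γ (uc F x) (uc F x) ξ =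
      ∑ i : Fin 3, ∑ j : Fin 3, (TB γ i j F x ξ * dv i (dv j F) (x, ξ) - TB γ i j (dv i (dv j F)) x ξ * F (x, ξ)) := by
  unfold Qop
  simp only [Q_inner γ hγ1 hγ2]
  have : ∑ i : Fin 3, ∑ j : Fin 3, TB γ i j (dv i F) x ξ * dv j F (x, ξ)
      = ∑ i : Fin 3, ∑ j : Fin 3, TB γ i j (dv j F) x ξ * dv i F (x, ξ) := by
    rw [Finset.sum_comm]
    refine Finset.sum_congr rfl fun i _ => Finset.sum_congr rfl fun j _ => ?_
    rw [TB_neg_symm]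
  simp only [Finset.sum_sub_distrib, Finset.sum_add_distrib, this]
  ring

/-- multiplication by `ξ_j` -/
def XX (j : Fin 3) : SS →ₗ[ℝ] SS := mulT (fun ξ => ξ j)

lemma XX_apply (j : Fin 3) (h : SS) (z : E3 × E3) : XX j h z = z.2 j * h z :=
  mulT_apply (coord_temperate j) h z

def MM : SS →ₗ[ℝ] SS := mulT sqrtM

lemma MM_apply (h : SS) (z : E3 × E3) : MM h z = sqrtM z.2 * h z :=
  mulT_apply sqrtM_temperate h z

lemma XX_kernel (γ : ℝ) (hγ1 : -3 ≤ γ) (hγ2 : γ < -2) (i : Fin 3) (h : SS) (x ξ : E3) :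
    ∑ j, TB γ i j (XX j h) x ξ = ∑ j, ξ j * TB γ i j h x ξ := by
  simp only [TB_eq, ← integral_const_mul]
  rw [← integral_finsetSum _ fun j _ => TB_int γ hγ1 hγ2 i j _ x ξ,
    ← integral_finsetSum _ fun j _ => (TB_int γ hγ1 hγ2 i j _ x ξ).const_mul _]
  congr 1; ext ξ'
  have := Bij_kernel γ i (ξ - ξ')
  simp only [XX_apply]
  have h2 : (∑ j, Bij γ i j (ξ - ξ') * (ξ - ξ') j) * h (x, ξ') = 0 := by rw [this]; simp
  rw [← sub_eq_zero, ← Finset.sum_sub_distrib, ← neg_eq_zero, ← h2, Finset.sum_mul, ← Finset.sum_neg_distrib]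
  refine Finset.sum_congr rfl fun j _ => ?_
  simp only [PiLp.sub_apply]; ring

lemma mulT_hasFDerivAt {g : E3 → ℝ} (hg : g.HasTemperateGrowth) (h : SS) (z : E3 × E3) (i : Fin 3) :
    dv i (mulT g h) z = pd i g z.2 * h z + g z.2 * dv i h z := by
  have e : (mulT g h : E3 × E3 → ℝ) = fun z => g z.2 * h z := by ext z; exact mulT_apply hg h z
  rw [dv, dm_apply, e, dm_apply]
  have hd : DifferentiableAt ℝ g z.2 := hg.1.differentiable (by simp) z.2
  have h1 := ((hd.hasFDerivAt.comp z (hasFDerivAt_snd (𝕜 := ℝ) (p := z))).fun_mul (h.hasFDerivAt z))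
  have h2 := h1.fderiv
  simp only [Function.comp_apply] at h2
  rw [h2]
  simp [ev, pd]
  ring

lemma dx_mulT {g : E3 → ℝ} (hg : g.HasTemperateGrowth) (h : SS) (i : Fin 3) :
    dx i (mulT g h) = mulT g (dx i h) := by
  ext z
  have e : (mulT g h : E3 × E3 → ℝ) = fun z => g z.2 * h z := by ext z; exact mulT_apply hg h z
  rw [mulT_apply hg, dx, dm_apply, e, dm_apply]
  have hd : DifferentiableAt ℝ g z.2 := hg.1.differentiable (by simp) z.2
  have h1 := ((hd.hasFDerivAt.comp z (hasFDerivAt_snd (𝕜 := ℝ) (p := z))).fun_mul (h.hasFDerivAt z))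
  have h2 := h1.fderiv
  simp only [Function.comp_apply] at h2
  rw [h2]
  simp [ex]

lemma pd_sqrtM (i : Fin 3) (ξ : E3) : pd i sqrtM ξ = -(1/2) * (ξ i * sqrtM ξ) := by
  have : sqrtM = fun ξ => (2 * π) ^ (-(3 : ℝ) / 4) * Real.exp (-‖ξ‖ ^ 2 / 4) := by
    ext ξ; exact sqrtM_eq ξ
  rw [pd, this]
  have h0 : HasFDerivAt (fun ξ : E3 => ‖ξ‖ ^ 2) (2 • innerSL ℝ ξ) ξ := (hasStrictFDerivAt_norm_sq ξ).hasFDerivAt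
  have h1 := ((h0.fun_neg.mul_const (4:ℝ)⁻¹).exp).const_mul ((2 * π) ^ (-(3 : ℝ) / 4))
  have h2 : (fun ξ : E3 => (2 * π) ^ (-(3 : ℝ) / 4) * Real.exp (-‖ξ‖ ^ 2 / 4)) =
    (fun ξ : E3 => (2 * π) ^ (-(3 : ℝ) / 4) * Real.exp (-‖ξ‖ ^ 2 * (4:ℝ)⁻¹)) := by
    funext y; rw [div_eq_mul_inv (-‖y‖ ^ 2)]
  rw [h2, h1.fderiv]
  simp [EuclideanSpace.inner_single_right]
  ring

lemma pd_coord (i j : Fin 3) (ξ : E3) : pd i (fun ξ : E3 => ξ j) ξ = if i = j then 1 else 0 := by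
  have : (fun ξ : E3 => ξ j) = co j := rfl
  rw [pd, this, ContinuousLinearMap.fderiv]
  simp [co, eq_comm]

lemma dv_MM (i : Fin 3) (h : SS) : dv i (MM h) = MM (dv i h) - (1/2 : ℝ) • XX i (MM h) := by
  ext z
  rw [MM, mulT_hasFDerivAt sqrtM_temperate, pd_sqrtM]
  simp only [sub_apply, smul_apply, XX_apply, mulT_apply sqrtM_temperate, smul_eq_mul]
  ring

lemma dv_XX (i j : Fin 3) (h : SS) : dv i (XX j h) = XX j (dv i h) + (if i = j then (1:ℝ) else 0) • h := by
  ext z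
  rw [XX, mulT_hasFDerivAt (coord_temperate j), pd_coord]
  simp only [add_apply, smul_apply, mulT_apply (coord_temperate j), smul_eq_mul]
  ring

lemma dvdv_MM (i j : Fin 3) (u : SS) : dv i (dv j (MM u)) =
    MM (dv i (dv j u)) - (1/2:ℝ) • XX i (MM (dv j u)) - (1/2:ℝ) • XX j (MM (dv i u))
      + (1/4:ℝ) • XX j (XX i (MM u)) - ((1/2:ℝ) * (if i = j then (1:ℝ) else 0)) • MM u := by
  rw [dv_MM j, map_sub, map_smul, dv_MM, dv_XX, dv_MM]
  simp only [map_sub, map_smul]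
  module

lemma Q_MM (γ : ℝ) (hγ1 : -3 ≤ γ) (hγ2 : γ < -2) (u : SS) (x ξ : E3) :
    Qop γ (uc (MM u) x) (uc (MM u) x) ξ = sqrtM ξ *
      ∑ i : Fin 3, ∑ j : Fin 3,
        (TB γ i j (MM u) x ξ * dv i (dv j u) (x, ξ) - TB γ i j (XX j (MM u)) x ξ * dv i u (x, ξ)
         + TB γ i j (XX j (MM (dv i u))) x ξ * u (x, ξ) - TB γ i j (MM (dv i (dv j u))) x ξ * u (x, ξ)) := by
  rw [Q_formula γ hγ1 hγ2]
  have e : ∀ i j h, TB γ i j h x ξ = TBL γ hγ1 hγ2 x ξ i j h := fun _ _ _ => rfl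
  have k1 : ∀ i h, ∑ j, TBL γ hγ1 hγ2 x ξ i j (XX j h) = ∑ j, ξ j * TBL γ hγ1 hγ2 x ξ i j h :=
    fun i h => XX_kernel γ hγ1 hγ2 i h x ξ
  have sy : ∀ i j h, TBL γ hγ1 hγ2 x ξ i j h = TBL γ hγ1 hγ2 x ξ j i h := fun i j h => TB_neg_symm γ i j h x ξ
  simp only [dvdv_MM, add_apply, sub_apply, smul_apply,
    MM_apply, XX_apply, e, map_add, map_sub, map_smul, smul_eq_mul]
  have k20 := k1 0 (MM u)
  have k21 := k1 1 (MM u)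
  have k22 := k1 2 (MM u)
  have k30 := k1 0 (XX 0 (MM u))
  have k31 := k1 1 (XX 1 (MM u))
  have k32 := k1 2 (XX 2 (MM u))
  simp only [Fin.sum_univ_three] at k20 k21 k22 k30 k31 k32 ⊢
  simp only [sy 1 0, sy 2 0, sy 2 1] at k20 k21 k22 k30 k31 k32 ⊢
  linear_combination (sqrtM ξ * dv 0 u (x, ξ) - sqrtM ξ * u (x, ξ) / 4 * ξ 0) * k20
    + (sqrtM ξ * dv 1 u (x, ξ) - sqrtM ξ * u (x, ξ) / 4 * ξ 1) * k21
    + (sqrtM ξ * dv 2 u (x, ξ) - sqrtM ξ * u (x, ξ) / 4 * ξ 2) * k22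
    - sqrtM ξ * u (x, ξ) / 4 * (k30 + k31 + k32)

lemma Gam_formula (γ : ℝ) (hγ1 : -3 ≤ γ) (hγ2 : γ < -2) (u : SS) (x ξ : E3) :
    Gam γ (uc u x) (uc u x) ξ =
      ∑ i : Fin 3, ∑ j : Fin 3,
        (TB γ i j (MM u) x ξ * dv i (dv j u) (x, ξ) - TB γ i j (XX j (MM u)) x ξ * dv i u (x, ξ)
         + TB γ i j (XX j (MM (dv i u))) x ξ * u (x, ξ) - TB γ i j (MM (dv i (dv j u))) x ξ * u (x, ξ)) := by
  have e : (fun ζ => sqrtM ζ * uc u x ζ) = uc (MM u) x := by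
    ext ζ; simp only [uc, MM_apply]
  unfold Gam
  rw [e, Q_MM γ hγ1 hγ2, ← mul_assoc]
  have h0 : 0 < Mx ξ := by unfold Mx; positivity
  have : Mx ξ ^ (-(1:ℝ) / 2) * sqrtM ξ = 1 := by
    unfold sqrtM
    rw [Real.sqrt_eq_rpow, ← Real.rpow_add h0]; norm_num
  rw [this, one_mul]

end

noncomputable section
set_option linter.unusedSectionVars false
open scoped LineDeriv SchwartzMap ContDiff ENNReal

lemma phiF_eq (u : SS) : phiF (uc u) = LP (MM u) := by
  ext x
  have hi := TT_integrable ker_P (MM u) (x, 0)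
  unfold phiF poisson LP TT
  rw [Measure.volume_eq_prod] at hi ⊢
  rw [integral_prod _ hi, ← integral_neg]
  rw [← integral_sub_left_eq_self _ volume x]
  congr 1; ext a
  simp only [kP, iid, ContinuousLinearMap.id_apply, Prod.mk_sub_mk, zero_sub, aF, aC, uc,
    sub_sub_cancel]
  rw [integral_const_mul]
  have := integral_neg_eq_self (fun b => MM u (x - a, b)) volume
  rw [this]
  simp only [MM_apply]
  ring

lemma pd_phiF (i : Fin 3) (u : SS) : pd i (phiF (uc u)) = LP (dx i (MM u)) := by
  rw [phiF_eq, pd_LP]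

lemma sob1 (g g' : ℝ → ℝ) (hg : ∀ t, HasDerivAt g (g' t) t) (hc : Continuous g') :
    ‖g 0‖ₑ ^ 2 ≤ ∫⁻ t, (‖g t‖ₑ ^ 2 + ‖g' t‖ₑ ^ 2) := by
  by_cases hfin : ∫⁻ t, (‖g t‖ₑ ^ 2 + ‖g' t‖ₑ ^ 2) = ⊤
  · rw [hfin]; exact le_top
  have hgc : Continuous g := continuous_iff_continuousAt.2 fun t => (hg t).continuousAt
  have e : ∀ t, ‖g t‖ₑ ^ 2 + ‖g' t‖ₑ ^ 2 = ‖g t ^ 2 + g' t ^ 2‖ₑ := by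
    intro t
    rw [← ofReal_norm, ← ofReal_norm, ← ofReal_norm, ← ENNReal.ofReal_pow (norm_nonneg _),
      ← ENNReal.ofReal_pow (norm_nonneg _), ← ENNReal.ofReal_add (by positivity) (by positivity)]
    congr 1
    rw [Real.norm_of_nonneg (by positivity : 0 ≤ g t ^ 2 + g' t ^ 2)]
    simp
  simp only [e] at hfin ⊢
  have hI : Integrable (fun t => g t ^ 2 + g' t ^ 2) :=
    ⟨(by fun_prop : Continuous fun t => g t ^ 2 + g' t ^ 2).aestronglyMeasurable, lt_top_iff_ne_top.2 hfin⟩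
  have h1 : Integrable (fun t => g t ^ 2) := hI.mono' (by fun_prop : Continuous fun t => g t ^ 2).aestronglyMeasurable
    (by filter_upwards with t; rw [Real.norm_of_nonneg (by positivity)]; nlinarith [sq_nonneg (g' t)])
  have h2 : Integrable (fun t => 2 * g t * g' t) := hI.mono' (by fun_prop : Continuous fun t => 2 * g t * g' t).aestronglyMeasurable
    (by
      filter_upwards with t
      rw [Real.norm_eq_abs, abs_le]; constructor <;> nlinarith [sq_nonneg (g t + g' t), sq_nonneg (g t - g' t)])
  have hd : ∀ t ∈ Set.Iic (0:ℝ), HasDerivAt (fun t => g t ^ 2) (2 * g t * g' t) t := fun t _ => by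
    have := (hg t).fun_pow 2; simpa using this
  have ht := tendsto_zero_of_hasDerivAt_of_integrableOn_Iic hd h2.integrableOn h1.integrableOn
  have h3 := integral_Iic_of_hasDerivAt_of_tendsto' hd h2.integrableOn ht
  rw [sub_zero] at h3
  have : ‖g 0‖ₑ ^ 2 = ‖g 0 ^ 2‖ₑ := by rw [enorm_pow]
  rw [this, ← h3]
  refine (enorm_integral_le_lintegral_enorm _).trans ?_
  refine (setLIntegral_le_lintegral _ _).trans (lintegral_mono fun t => ?_)
  rw [enorm_le_iff_norm_le]
  rw [Real.norm_of_nonneg (by positivity : 0 ≤ g t ^ 2 + g' t ^ 2), Real.norm_eq_abs, abs_le]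
  constructor <;> nlinarith [sq_nonneg (g t + g' t), sq_nonneg (g t - g' t)]

abbrev se (i : Fin 3) : E3 := EuclideanSpace.single i 1

lemma lint3 (F : E3 → ℝ≥0∞) (hF : Measurable F) (x : E3) :
    ∫⁻ r : ℝ, ∫⁻ s : ℝ, ∫⁻ t : ℝ, F (x + r • se 0 + s • se 1 + t • se 2) = ∫⁻ y, F y := by
  rw [← lintegral_add_left_eq_self F x, ← (PiLp.volume_preserving_toLp (Fin 3)).lintegral_comp (by fun_prop),
    ← ((volume_preserving_piFinSuccAbove (fun _ : Fin 3 => ℝ) 0).symm _).lintegral_comp (by fun_prop),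
    Measure.volume_eq_prod, lintegral_prod _ (by fun_prop)]
  congr 1; ext r
  rw [← ((volume_preserving_finTwoArrow ℝ).symm _).lintegral_comp (by fun_prop),
    Measure.volume_eq_prod, lintegral_prod _ (by fun_prop)]
  congr 1; ext s
  congr 1; ext t
  congr 1
  rw [add_assoc, add_assoc]
  congr 1
  ext k
  fin_cases k <;> simp [MeasurableEquiv.piFinSuccAbove, MeasurableEquiv.finTwoArrow, se]

/-- A family of functions of `x` compatible with the `x`-derivatives. -/
structure XFam (L : SS → E3 → ℝ) : Prop where
  diff : ∀ h, Differentiable ℝ (L h)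
  pd : ∀ i h, pd i (L h) = L (dx i h)

lemma XFam.line {L : SS → E3 → ℝ} (hL : XFam L) (h : SS) (i : Fin 3) (x : E3) :
    ‖L h x‖ₑ ^ 2 ≤ ∫⁻ t : ℝ, (‖L h (x + t • se i)‖ₑ ^ 2 + ‖L (dx i h) (x + t • se i)‖ₑ ^ 2) := by
  have := sob1 (fun t => L h (x + t • se i)) (fun t => L (dx i h) (x + t • se i)) (fun t => by
    have h1 : HasDerivAt (fun t : ℝ => x + t • se i) (se i) t := by
      have := ((hasDerivAt_id t).smul_const (se i)).const_add x
      simpa using this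
    have h2 := ((hL.diff h (x + t • se i)).hasFDerivAt).comp_hasDerivAt t h1
    have h3 := congrFun (hL.pd i h) (x + t • se i)
    unfold _root_.pd at h3
    rw [← h3]
    exact h2) (by
    have := (hL.diff (dx i h)).continuous
    fun_prop)
  simpa using this

def cube : Finset (ℕ × ℕ × ℕ) := Finset.range 2 ×ˢ Finset.range 2 ×ˢ Finset.range 2

def dxp (p : ℕ × ℕ × ℕ) : Module.End ℝ SS := dx 0 ^ p.1 * dx 1 ^ p.2.1 * dx 2 ^ p.2.2

lemma XFam.sob {L : SS → E3 → ℝ} (hL : XFam L) (h : SS) (x : E3) :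
    ‖L h x‖ₑ ^ 2 ≤ ∑ p ∈ cube, ∫⁻ y, ‖L (dxp p h) y‖ₑ ^ 2 := by
  have hm : ∀ h, Measurable (fun y => ‖L h y‖ₑ ^ 2) := fun h =>
    ((hL.diff h).continuous.measurable.enorm).pow_const 2
  have hq : ∀ h (v w : E3), Measurable (fun t : ℝ => ‖L h (v + t • w)‖ₑ ^ 2) := fun h v w =>
    (hm h).comp (by fun_prop : Measurable fun t : ℝ => v + t • w)
  have hcm : ∀ {a b c d : Module.End ℝ SS}, a * b = c * d → ∀ h, a (b h) = c (d h) := fun e h => by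
    have := congrArg (fun f => f h) e; simpa using this
  have c1 : ∀ i j h, dx i (dx j h) = dx j (dx i h) := fun i j h => hcm (dm_comm (ex i) (ex j)).eq h
  calc ‖L h x‖ₑ ^ 2 ≤ ∫⁻ r : ℝ, ∫⁻ s : ℝ, ∫⁻ t : ℝ,
        ∑ p ∈ cube, ‖L (dxp p h) (x + r • se 0 + s • se 1 + t • se 2)‖ₑ ^ 2 := by
        refine (hL.line h 0 x).trans (lintegral_mono fun r => ?_)
        refine (add_le_add (hL.line h 1 _) (hL.line (dx 0 h) 1 _)).trans ?_
        rw [← lintegral_add_left (by exact (hq _ _ _).add (hq _ _ _))]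
        refine lintegral_mono fun s => ?_
        refine (add_le_add (add_le_add (hL.line _ 2 _) (hL.line _ 2 _))
          (add_le_add (hL.line _ 2 _) (hL.line _ 2 _))).trans ?_
        rw [← lintegral_add_left (by exact (hq _ _ _).add (hq _ _ _)),
          ← lintegral_add_left (by exact (hq _ _ _).add (hq _ _ _)),
          ← lintegral_add_left (by exact ((hq _ _ _).add (hq _ _ _)).add ((hq _ _ _).add (hq _ _ _)))]
        refine lintegral_mono fun t => ?_
        simp only [cube, Finset.sum_product, Finset.sum_range_succ, Finset.sum_range_zero, dxp, pow_zero, pow_one,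
          Module.End.mul_apply, Module.End.one_apply, zero_add]
        apply le_of_eq
        simp only [c1 2 1, c1 2 0, c1 1 0]
    _ = ∫⁻ y, ∑ p ∈ cube, ‖L (dxp p h) y‖ₑ ^ 2 := by
        rw [lint3 (fun y => ∑ p ∈ cube, ‖L (dxp p h) y‖ₑ ^ 2)]
        exact Finset.measurable_fun_sum _ fun p _ => hm _
    _ = _ := lintegral_finsetSum _ fun p _ => hm _

lemma XFam_LP : XFam LP := ⟨LP_differentiable, pd_LP⟩

lemma XFam_slice (ξ : E3) : XFam (fun h x => h (x, ξ)) :=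
  ⟨fun h x => (slice_x h x ξ).differentiableAt, fun i h => by
    ext x
    exact congrFun (congrFun (pdx_uc i h) x) ξ⟩
end

noncomputable section
set_option linter.unusedSectionVars false
open scoped LineDeriv SchwartzMap ContDiff ENNReal

/-- increment a multi-index -/
def bump (i : Fin 3) (p : MIdx) : MIdx :=
  (if i = 0 then p.1 + 1 else p.1, if i = 1 then p.2.1 + 1 else p.2.1, if i = 2 then p.2.2 + 1 else p.2.2)

lemma deg_bump (i : Fin 3) (p : MIdx) : deg (bump i p) = deg p + 1 := by
  fin_cases i <;> simp [bump, deg] <;> ring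

lemma endo_bump (d : Fin 3 → Module.End ℝ SS) (hd : ∀ i j, Commute (d i) (d j)) (i : Fin 3) (p : MIdx) :
    d i * (d 0 ^ p.1 * d 1 ^ p.2.1 * d 2 ^ p.2.2) =
      d 0 ^ (bump i p).1 * d 1 ^ (bump i p).2.1 * d 2 ^ (bump i p).2.2 := by
  fin_cases i
  · simp [bump, pow_succ', mul_assoc]
  · simp only [bump, Fin.mk_one, Fin.reduceEq, if_false, if_true, pow_succ']
    rw [← mul_assoc, ← mul_assoc, ← mul_assoc, ((hd 1 0).pow_right p.1).eq]
  · simp only [bump, Fin.reduceFinMk, Fin.reduceEq, if_false, if_true, pow_succ']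
    have := (((hd 2 0).pow_right p.1).mul_right ((hd 2 1).pow_right p.2.1)).eq
    rw [← mul_assoc, this, mul_assoc]

def dvp (p : ℕ × ℕ × ℕ) : Module.End ℝ SS := dv 0 ^ p.1 * dv 1 ^ p.2.1 * dv 2 ^ p.2.2

lemma dx_dxp (i : Fin 3) (p : MIdx) (h : SS) : dx i (dxp p h) = dxp (bump i p) h := by
  have := endo_bump dx (fun i j => dm_comm _ _) i p
  exact congrArg (fun f : Module.End ℝ SS => f h) this

lemma dv_dvp (i : Fin 3) (p : MIdx) (h : SS) : dv i (dvp p h) = dvp (bump i p) h := by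
  have := endo_bump dv (fun i j => dm_comm _ _) i p
  exact congrArg (fun f : Module.End ℝ SS => f h) this

lemma dm_dvp (m : E3 × E3) (p : MIdx) (h : SS) : dm m (dvp p h) = dvp p (dm m h) := by
  have : Commute (dm m) (dvp p) :=
    (((dm_comm m (ev 0)).pow_right _).mul_right ((dm_comm m (ev 1)).pow_right _)).mul_right
      ((dm_comm m (ev 2)).pow_right _)
  exact congrArg (fun f : Module.End ℝ SS => f h) this.eq

lemma dm_dxp (m : E3 × E3) (p : MIdx) (h : SS) : dm m (dxp p h) = dxp p (dm m h) := by
  have : Commute (dm m) (dxp p) :=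
    (((dm_comm m (ex 0)).pow_right _).mul_right ((dm_comm m (ex 1)).pow_right _)).mul_right
      ((dm_comm m (ex 2)).pow_right _)
  exact congrArg (fun f : Module.End ℝ SS => f h) this.eq

lemma dxp_zero (h : SS) : dxp (0, 0, 0) h = h := by simp [dxp]
lemma dvp_zero (h : SS) : dvp (0, 0, 0) h = h := by simp [dvp]

/-- `h` is a derivative of `u` of order `(a,b)`. -/
def Good (a b : ℕ) (u h : SS) : Prop := ∃ α β : MIdx, deg α = a ∧ deg β = b ∧ h = dvp β (dxp α u)

lemma Good.refl (u : SS) : Good 0 0 u u := ⟨(0,0,0), (0,0,0), rfl, rfl, by rw [dxp_zero, dvp_zero]⟩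

lemma Good.dx {a b : ℕ} {u h : SS} (hg : Good a b u h) (i : Fin 3) : Good (a + 1) b u (dx i h) := by
  obtain ⟨α, β, h1, h2, rfl⟩ := hg
  refine ⟨bump i α, β, by rw [deg_bump, h1], h2, ?_⟩
  rw [_root_.dx, dm_dvp, ← dx_dxp]; rfl

lemma Good.dv {a b : ℕ} {u h : SS} (hg : Good a b u h) (i : Fin 3) : Good a (b + 1) u (dv i h) := by
  obtain ⟨α, β, h1, h2, rfl⟩ := hg
  exact ⟨α, bump i β, h1, by rw [deg_bump, h2], dv_dvp i β _⟩

lemma Good.dxpow {a b : ℕ} {u : SS} (i : Fin 3) (n : ℕ) : ∀ {h : SS}, Good a b u h →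
    Good (a + n) b u ((_root_.dx i ^ n) h) := by
  induction n with
  | zero => intro h hg; simpa using hg
  | succ n ih =>
    intro h hg
    rw [pow_succ', Module.End.mul_apply]
    exact (ih hg).dx i

lemma Good.dxp {a b : ℕ} {u h : SS} (hg : Good a b u h) (p : MIdx) : Good (a + deg p) b u (dxp p h) := by
  have := ((hg.dxpow 2 p.2.2).dxpow 1 p.2.1).dxpow 0 p.1
  have e : a + p.2.2 + p.2.1 + p.1 = a + deg p := by unfold deg; ring
  rw [e] at this
  exact this

lemma deg_cube {p : MIdx} (hp : p ∈ cube) : deg p ≤ 3 := by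
  simp only [cube, Finset.mem_product, Finset.mem_range] at hp
  unfold deg; omega

lemma card_cube : cube.card = 8 := by simp [cube]

lemma iter_uc_x (i : Fin 3) (n : ℕ) (h : SS) : (pdx i)^[n] (uc h) = uc ((dx i ^ n) h) := by
  induction n with
  | zero => rfl
  | succ n ih => rw [Function.iterate_succ_apply', ih, pdx_uc, pow_succ', Module.End.mul_apply]

lemma iter_uc_v (i : Fin 3) (n : ℕ) (h : SS) (x : E3) : (pd i)^[n] (uc h x) = uc ((dv i ^ n) h) x := by
  induction n with
  | zero => rfl
  | succ n ih => rw [Function.iterate_succ_apply', ih, pd_uc, pow_succ', Module.End.mul_apply]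

lemma iter_LP (i : Fin 3) (n : ℕ) (h : SS) : (pd i)^[n] (LP h) = LP ((dx i ^ n) h) := by
  induction n with
  | zero => rfl
  | succ n ih => rw [Function.iterate_succ_apply', ih, pd_LP, pow_succ', Module.End.mul_apply]

lemma pdxM_uc (α : MIdx) (h : SS) : pdxM α (uc h) = uc (dxp α h) := by
  unfold pdxM; simp only [iter_uc_x]; rfl

lemma pdM_uc (α : MIdx) (h : SS) (x : E3) : pdM α (uc h x) = uc (dvp α h) x := by
  unfold pdM; simp only [iter_uc_v]; rfl

lemma pdM_LP (α : MIdx) (h : SS) : pdM α (LP h) = LP (dxp α h) := by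
  unfold pdM; simp only [iter_LP]; rfl

lemma pdab_uc (α β : MIdx) (u : SS) : pdab α β (uc u) = uc (dvp β (dxp α u)) := by
  unfold pdab; rw [pdxM_uc]; ext x ξ; rw [pdM_uc]

lemma sch_sq (g : SS) : ENNReal.ofReal (∫ x, ∫ ξ, g (x, ξ) ^ 2) = ∫⁻ x, ∫⁻ ξ, ‖g (x, ξ)‖ₑ ^ 2 := by
  have hi : Integrable (fun z => g z ^ 2) (Measure.prod (volume : Measure E3) (volume : Measure E3)) :=
    (g.memLp 2 volume).integrable_sq
  have h1 := integral_prod _ hi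
  rw [← h1, ofReal_integral_eq_lintegral_ofReal hi (by filter_upwards with z; positivity), lintegral_prod]
  · congr 1; ext x; congr 1; ext ξ
    rw [← ofReal_norm, ← ENNReal.ofReal_pow (norm_nonneg _)]; simp
  · have := g.continuous
    exact (ENNReal.continuous_ofReal.comp (this.pow 2)).aemeasurable

/-- the energy -/
def En (γ : ℝ) (N : ℕ) (ℓ : ℝ) (u : SS) : ℝ≥0∞ := ENNReal.ofReal (triSq γ N (ℓ - 1) 0 1 0 (uc u))

lemma xnormSq_nonneg (γ τ lam ϑ t : ℝ) (u : E3 → E3 → ℝ) : 0 ≤ xnormSq γ τ lam ϑ t u :=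
  integral_nonneg fun x => integral_nonneg fun ξ => by positivity

lemma HsobSq_nonneg (N : ℕ) (f : E3 → ℝ) : 0 ≤ HsobSq N f :=
  Finset.sum_nonneg fun α _ => integral_nonneg fun x => by positivity

lemma gradSobSq_nonneg (N : ℕ) (f : E3 → ℝ) : 0 ≤ gradSobSq N f :=
  Finset.sum_nonneg fun i _ => HsobSq_nonneg N _

lemma mem_midx {N : ℕ} {α : MIdx} (h : deg α ≤ N) : α ∈ midx N := by
  simp only [midx, Finset.mem_filter, Finset.mem_product, Finset.mem_range, h, and_true]
  unfold deg at h; omega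

lemma mem_midxP {N : ℕ} {α β : MIdx} (h : deg α + deg β ≤ N) : (α, β) ∈ midxP N := by
  simp only [midxP, Finset.mem_filter, Finset.mem_product, h, and_true]
  exact ⟨mem_midx (by omega), mem_midx (by omega)⟩

lemma xnorm_uc (γ τ : ℝ) (h : SS) : ENNReal.ofReal (xnormSq γ τ 0 1 0 (uc h)) =
    ∫⁻ x, ∫⁻ ξ, ‖jap ξ ^ ((γ + 2) * τ) * h (x, ξ)‖ₑ ^ 2 := by
  have e := sch_sq (mulT (fun ξ => jap ξ ^ ((γ + 2) * τ)) h)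
  simp only [mulT_apply (jap_rpow_temperate _)] at e
  rw [← e]
  unfold xnormSq vnormSq wt uc
  simp [mul_pow]

lemma energy_le (γ : ℝ) (N : ℕ) (ℓ : ℝ) {a b : ℕ} {u h : SS} (hg : Good a b u h) (hab : a + b ≤ N)
    (τ : ℝ) (hτ : τ ≤ (γ + 2) * (b - (ℓ - 1))) :
    ∫⁻ x, ∫⁻ ξ, ‖jap ξ ^ τ * h (x, ξ)‖ₑ ^ 2 ≤ En γ N ℓ u := by
  obtain ⟨α, β, rfl, rfl, rfl⟩ := hg
  have h1 : xnormSq γ ((deg β : ℝ) - (ℓ - 1)) 0 1 0 (uc (dvp β (dxp α u))) ≤ triSq γ N (ℓ - 1) 0 1 0 (uc u) := by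
    unfold triSq
    have := Finset.single_le_sum (s := midxP N)
      (f := fun p => xnormSq γ ((deg p.2 : ℝ) - (ℓ - 1)) 0 1 0 (pdab p.1 p.2 (uc u)))
      (fun p _ => xnormSq_nonneg _ _ _ _ _ _) (mem_midxP hab)
    simp only [pdab_uc] at this ⊢
    have h2 := gradSobSq_nonneg N (phiF (uc u))
    linarith
  calc _ ≤ ∫⁻ x, ∫⁻ ξ, ‖jap ξ ^ ((γ + 2) * ((deg β : ℝ) - (ℓ - 1))) * (dvp β (dxp α u)) (x, ξ)‖ₑ ^ 2 := by
        refine lintegral_mono fun x => lintegral_mono fun ξ => ?_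
        simp only [enorm_mul]
        gcongr
        rw [enorm_le_iff_norm_le]
        have := jap_pos ξ
        rw [Real.norm_of_nonneg (by positivity), Real.norm_of_nonneg (by positivity)]
        exact Real.rpow_le_rpow_of_exponent_le (one_le_jap ξ) hτ
    _ ≤ _ := by
        rw [← xnorm_uc]
        exact ENNReal.ofReal_le_ofReal h1

lemma dxp_MM (p : MIdx) (h : SS) : dxp p (MM h) = MM (dxp p h) := by
  have c : ∀ i (n : ℕ) h, (dx i ^ n) (MM h) = MM ((dx i ^ n) h) := by
    intro i n
    induction n with
    | zero => intro h; simp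
    | succ n ih =>
      intro h
      rw [pow_succ, Module.End.mul_apply, MM, dx_mulT sqrtM_temperate, ← MM, ih]
      rfl
  unfold dxp
  simp only [Module.End.mul_apply, c]

lemma phi_le (γ : ℝ) (N : ℕ) (ℓ : ℝ) {a : ℕ} {u h : SS} (hg : Good a 0 u h) (ha : a ≤ N) (i : Fin 3) :
    ∫⁻ x, ‖LP (dx i (MM h)) x‖ₑ ^ 2 ≤ En γ N ℓ u := by
  obtain ⟨α, β, rfl, hβ, rfl⟩ := hg
  have hβ' : β = (0, 0, 0) := by
    obtain ⟨a, b, c⟩ := β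
    simp only [deg] at hβ
    simp only [Prod.mk.injEq]; omega
  subst hβ'
  rw [dvp_zero]
  have hI : Integrable (fun x => LP (dx i (MM (dxp α u))) x ^ 2) := LP_sq_integrable (ex i) (MM (dxp α u))
  have h1 : L2Sq (LP (dx i (MM (dxp α u)))) ≤ triSq γ N (ℓ - 1) 0 1 0 (uc u) := by
    unfold triSq
    have s0 : ∀ p ∈ midxP N, 0 ≤ xnormSq γ ((deg p.2 : ℝ) - (ℓ - 1)) 0 1 0 (pdab p.1 p.2 (uc u)) :=
      fun p _ => xnormSq_nonneg _ _ _ _ _ _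
    have s1 := Finset.sum_nonneg s0
    have s2 : HsobSq N (pd i (phiF (uc u))) ≤ gradSobSq N (phiF (uc u)) :=
      Finset.single_le_sum (f := fun i => HsobSq N (pd i (phiF (uc u))))
        (fun j _ => HsobSq_nonneg N _) (Finset.mem_univ i)
    have s3 : L2Sq (pdM α (pd i (phiF (uc u)))) ≤ HsobSq N (pd i (phiF (uc u))) :=
      Finset.single_le_sum (f := fun α => L2Sq (pdM α (pd i (phiF (uc u)))))
        (fun j _ => integral_nonneg fun x => by positivity) (mem_midx ha)
    have e : pdM α (pd i (phiF (uc u))) = LP (dx i (MM (dxp α u))) := by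
      rw [pd_phiF, pdM_LP, dx, ← dm_dxp, dxp_MM]
    rw [e] at s3
    linarith
  refine le_trans (le_of_eq ?_) (ENNReal.ofReal_le_ofReal h1)
  unfold L2Sq
  rw [ofReal_integral_eq_lintegral_ofReal hI (by filter_upwards with z; positivity)]
  congr 1; ext x
  rw [← ofReal_norm, ← ENNReal.ofReal_pow (norm_nonneg _)]; simp

lemma phi_sup (γ : ℝ) (N : ℕ) (ℓ : ℝ) {a : ℕ} {u h : SS} (hg : Good a 0 u h) (ha : a + 3 ≤ N) (i : Fin 3) (x : E3) :
    ‖LP (dx i (MM h)) x‖ₑ ^ 2 ≤ 8 * En γ N ℓ u := by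
  refine (XFam_LP.sob _ x).trans ?_
  calc _ ≤ ∑ p ∈ cube, En γ N ℓ u := by
        refine Finset.sum_le_sum fun p hp => ?_
        have e : dxp p (dx i (MM h)) = dx i (MM (dxp p h)) := by
          rw [dx, ← dm_dxp, dxp_MM]
        rw [e]
        have := deg_cube hp
        exact phi_le γ N ℓ (hg.dxp p) (by omega) i
    _ = _ := by rw [Finset.sum_const, card_cube]; simp

lemma slice_sup (γ : ℝ) (N : ℕ) (ℓ : ℝ) {a b : ℕ} {u h : SS} (hg : Good a b u h) (hab : a + b + 3 ≤ N)
    (τ : ℝ) (hτ : τ ≤ (γ + 2) * (b - (ℓ - 1))) (x : E3) :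
    ∫⁻ ξ, ‖jap ξ ^ τ * h (x, ξ)‖ₑ ^ 2 ≤ 8 * En γ N ℓ u := by
  have hjm : Continuous (fun ξ : E3 => jap ξ ^ τ) := (jap_rpow_temperate τ).1.continuous
  have hmz : ∀ h : SS, Measurable (fun z : E3 × E3 => ‖jap z.2 ^ τ * h z‖ₑ ^ 2) := fun h => by
    have h1 : Continuous (fun z : E3 × E3 => jap z.2 ^ τ) := hjm.comp continuous_snd
    exact (h1.mul h.continuous).measurable.enorm.pow_const 2
  have k1 : ∀ ξ, ‖jap ξ ^ τ * h (x, ξ)‖ₑ ^ 2 ≤ ∑ p ∈ cube, ∫⁻ y, ‖jap ξ ^ τ * (dxp p h) (y, ξ)‖ₑ ^ 2 := by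
    intro ξ
    have h1 := (XFam_slice ξ).sob h x
    rw [enorm_mul, mul_pow]
    refine (mul_le_mul_right h1 _).trans ?_
    rw [Finset.mul_sum]
    refine Finset.sum_le_sum fun p _ => ?_
    rw [← lintegral_const_mul]
    · apply le_of_eq
      congr 1; ext y
      rw [enorm_mul, mul_pow]
    · have : Continuous fun y => (dxp p h) (y, ξ) := (dxp p h).continuous.comp (by fun_prop)
      exact this.measurable.enorm.pow_const 2
  have k2 : ∀ p ∈ cube, ∫⁻ ξ, ∫⁻ y, ‖jap ξ ^ τ * (dxp p h) (y, ξ)‖ₑ ^ 2 ≤ En γ N ℓ u := by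
    intro p hp
    have h2 := lintegral_lintegral_swap (μ := (volume : Measure E3)) (ν := (volume : Measure E3))
      (f := fun ξ y => ‖jap ξ ^ τ * (dxp p h) (y, ξ)‖ₑ ^ 2)
      ((hmz (dxp p h)).comp measurable_swap).aemeasurable
    rw [h2]
    have := deg_cube hp
    exact energy_le γ N ℓ (hg.dxp p) (by omega) τ hτ
  have k3 : ∀ p, Measurable fun ξ => ∫⁻ y, ‖jap ξ ^ τ * (dxp p h) (y, ξ)‖ₑ ^ 2 := fun p =>
    Measurable.lintegral_prod_left' (hmz (dxp p h))
  refine (lintegral_mono k1).trans ?_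
  rw [lintegral_finsetSum _ fun p _ => k3 p]
  refine (Finset.sum_le_sum k2).trans (le_of_eq ?_)
  rw [Finset.sum_const, card_cube]; simp
end

noncomputable section
set_option linter.unusedSectionVars false
open scoped LineDeriv SchwartzMap ContDiff ENNReal NNReal

def FL2 (σ : ℝ) (En : SS → ℝ≥0∞) (Φ : SS → E3 → E3 → ℝ) : Prop :=
  (∀ u, Measurable (Function.uncurry (Φ u))) ∧
    ∃ C : ℝ≥0, ∀ u, ∫⁻ x, ∫⁻ ξ, ‖jap ξ ^ σ * Φ u x ξ‖ₑ ^ 2 ≤ C * En u ^ 2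

def FZ1 (σ : ℝ) (En : SS → ℝ≥0∞) (Φ : SS → E3 → E3 → ℝ) : Prop :=
  (∀ u, Measurable (Function.uncurry (Φ u))) ∧
    ∃ C : ℝ≥0, ∀ u, ∫⁻ ξ, (∫⁻ x, ‖jap ξ ^ σ * Φ u x ξ‖ₑ) ^ 2 ≤ C * En u ^ 2

lemma sq_add_le4 (a b : ℝ≥0∞) : (a + b) ^ 2 ≤ 4 * (a ^ 2 + b ^ 2) := by
  rcases le_total a b with h | h
  · calc (a + b) ^ 2 ≤ (b + b) ^ 2 := by gcongr
      _ = 4 * b ^ 2 := by ring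
      _ ≤ _ := by gcongr; exact le_add_self
  · calc (a + b) ^ 2 ≤ (a + a) ^ 2 := by gcongr
      _ = 4 * a ^ 2 := by ring
      _ ≤ _ := by gcongr; exact le_self_add

lemma jap_meas (σ : ℝ) : Measurable (fun ξ : E3 => jap ξ ^ σ) :=
  (jap_rpow_temperate σ).1.continuous.measurable

lemma wmeas (σ : ℝ) {Ψ : E3 → E3 → ℝ} (h : Measurable (Function.uncurry Ψ)) :
    Measurable (fun z : E3 × E3 => ‖jap z.2 ^ σ * Ψ z.1 z.2‖ₑ) :=
  (((jap_meas σ).comp measurable_snd).mul h).enorm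

lemma msec_l {f : E3 → E3 → ℝ≥0∞} (hf : Measurable (fun z : E3 × E3 => f z.1 z.2)) (x : E3) :
    Measurable (fun ξ => f x ξ) := by
  have : Measurable (fun ξ : E3 => (x, ξ)) := measurable_prodMk_left
  exact hf.comp this

lemma msec_r {f : E3 → E3 → ℝ≥0∞} (hf : Measurable (fun z : E3 × E3 => f z.1 z.2)) (ξ : E3) :
    Measurable (fun x => f x ξ) := by
  have : Measurable (fun x : E3 => (x, ξ)) := measurable_prodMk_right
  exact hf.comp this

lemma mint_l {f : E3 → E3 → ℝ≥0∞} (hf : Measurable (fun z : E3 × E3 => f z.1 z.2)) :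
    Measurable (fun x => ∫⁻ ξ, f x ξ) :=
  Measurable.lintegral_prod_right' hf

lemma mint_r {f : E3 → E3 → ℝ≥0∞} (hf : Measurable (fun z : E3 × E3 => f z.1 z.2)) :
    Measurable (fun ξ => ∫⁻ x, f x ξ) :=
  Measurable.lintegral_prod_left' hf

lemma dl_add {f g h : E3 → E3 → ℝ≥0∞} (hf : Measurable (fun z : E3 × E3 => f z.1 z.2))
    (hh : ∀ x ξ, h x ξ ≤ f x ξ + g x ξ) :
    ∫⁻ x, ∫⁻ ξ, h x ξ ^ 2 ≤ 4 * ((∫⁻ x, ∫⁻ ξ, f x ξ ^ 2) + ∫⁻ x, ∫⁻ ξ, g x ξ ^ 2) := by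
  have hf2 : Measurable (fun z : E3 × E3 => f z.1 z.2 ^ 2) := hf.pow_const 2
  have k := mint_l (f := fun x ξ => f x ξ ^ 2) hf2
  rw [← lintegral_add_left k, ← lintegral_const_mul' _ _ (by norm_num)]
  refine lintegral_mono fun x => ?_
  have k2 := msec_l (f := fun x ξ => f x ξ ^ 2) hf2 x
  dsimp only
  rw [← lintegral_add_left k2, ← lintegral_const_mul' _ _ (by norm_num)]
  refine lintegral_mono fun ξ => ?_
  refine le_trans ?_ (sq_add_le4 _ _)
  gcongr
  exact hh x ξ

lemma dz_add {f g h : E3 → E3 → ℝ≥0∞} (hf : Measurable (fun z : E3 × E3 => f z.1 z.2))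
    (hh : ∀ x ξ, h x ξ ≤ f x ξ + g x ξ) :
    ∫⁻ ξ, (∫⁻ x, h x ξ) ^ 2 ≤ 4 * ((∫⁻ ξ, (∫⁻ x, f x ξ) ^ 2) + ∫⁻ ξ, (∫⁻ x, g x ξ) ^ 2) := by
  have k : Measurable (fun ξ => (∫⁻ x, f x ξ) ^ 2) := (mint_r hf).pow_const 2
  rw [← lintegral_add_left k, ← lintegral_const_mul' _ _ (by norm_num)]
  refine lintegral_mono fun ξ => ?_
  refine le_trans ?_ (sq_add_le4 _ _)
  have k2 := msec_r hf ξ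
  gcongr
  rw [← lintegral_add_left k2]
  exact lintegral_mono fun x => hh x ξ

lemma FL2.add {σ En Φ Θ} (h1 : FL2 σ En Φ) (h2 : FL2 σ En Θ) :
    FL2 σ En (fun u x ξ => Φ u x ξ + Θ u x ξ) := by
  obtain ⟨m1, C1, b1⟩ := h1
  obtain ⟨m2, C2, b2⟩ := h2
  refine ⟨fun u => (m1 u).add (m2 u), 4 * (C1 + C2), fun u => ?_⟩
  have hp : ∀ x ξ, ‖jap ξ ^ σ * (Φ u x ξ + Θ u x ξ)‖ₑ
      ≤ ‖jap ξ ^ σ * Φ u x ξ‖ₑ + ‖jap ξ ^ σ * Θ u x ξ‖ₑ := fun x ξ => by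
    rw [mul_add]; exact enorm_add_le _ _
  have key := dl_add (f := fun x ξ => ‖jap ξ ^ σ * Φ u x ξ‖ₑ)
    (g := fun x ξ => ‖jap ξ ^ σ * Θ u x ξ‖ₑ) (wmeas σ (m1 u)) hp
  have e : ((4 * (C1 + C2) : ℝ≥0) : ℝ≥0∞) * En u ^ 2 = 4 * (C1 * En u ^ 2 + C2 * En u ^ 2) := by
    push_cast; ring
  rw [e]
  refine key.trans ?_
  gcongr
  exacts [b1 u, b2 u]

lemma FZ1.add {σ En Φ Θ} (h1 : FZ1 σ En Φ) (h2 : FZ1 σ En Θ) :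
    FZ1 σ En (fun u x ξ => Φ u x ξ + Θ u x ξ) := by
  obtain ⟨m1, C1, b1⟩ := h1
  obtain ⟨m2, C2, b2⟩ := h2
  refine ⟨fun u => (m1 u).add (m2 u), 4 * (C1 + C2), fun u => ?_⟩
  have hp : ∀ x ξ, ‖jap ξ ^ σ * (Φ u x ξ + Θ u x ξ)‖ₑ
      ≤ ‖jap ξ ^ σ * Φ u x ξ‖ₑ + ‖jap ξ ^ σ * Θ u x ξ‖ₑ := fun x ξ => by
    rw [mul_add]; exact enorm_add_le _ _
  have key := dz_add (f := fun x ξ => ‖jap ξ ^ σ * Φ u x ξ‖ₑ)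
    (g := fun x ξ => ‖jap ξ ^ σ * Θ u x ξ‖ₑ) (wmeas σ (m1 u)) hp
  have e : ((4 * (C1 + C2) : ℝ≥0) : ℝ≥0∞) * En u ^ 2 = 4 * (C1 * En u ^ 2 + C2 * En u ^ 2) := by
    push_cast; ring
  rw [e]
  refine key.trans ?_
  gcongr
  exacts [b1 u, b2 u]

lemma FL2.smul {σ En Φ} (c : ℝ) (h1 : FL2 σ En Φ) : FL2 σ En (fun u x ξ => c * Φ u x ξ) := by
  obtain ⟨m1, C1, b1⟩ := h1
  refine ⟨fun u => (m1 u).const_mul c, ‖c‖₊ ^ 2 * C1, fun u => ?_⟩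
  calc _ = ∫⁻ x, ∫⁻ ξ, (‖c‖₊ : ℝ≥0∞) ^ 2 * ‖jap ξ ^ σ * Φ u x ξ‖ₑ ^ 2 := by
        congr 1; ext x; congr 1; ext ξ
        rw [← mul_pow, mul_left_comm, enorm_mul c]; rfl
    _ = (‖c‖₊ : ℝ≥0∞) ^ 2 * ∫⁻ x, ∫⁻ ξ, ‖jap ξ ^ σ * Φ u x ξ‖ₑ ^ 2 := by
        rw [← lintegral_const_mul' _ _ (by simp)]
        congr 1; ext x; rw [lintegral_const_mul' _ _ (by simp)]
    _ ≤ _ := by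
        push_cast; rw [mul_assoc]; gcongr; exact b1 u

lemma FZ1.smul {σ En Φ} (c : ℝ) (h1 : FZ1 σ En Φ) : FZ1 σ En (fun u x ξ => c * Φ u x ξ) := by
  obtain ⟨m1, C1, b1⟩ := h1
  refine ⟨fun u => (m1 u).const_mul c, ‖c‖₊ ^ 2 * C1, fun u => ?_⟩
  calc _ = ∫⁻ ξ, (‖c‖₊ : ℝ≥0∞) ^ 2 * (∫⁻ x, ‖jap ξ ^ σ * Φ u x ξ‖ₑ) ^ 2 := by
        congr 1; ext ξ
        rw [← mul_pow, ← lintegral_const_mul' _ _ (by simp)]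
        congr 2; ext x
        rw [mul_left_comm, enorm_mul c]; rfl
    _ = (‖c‖₊ : ℝ≥0∞) ^ 2 * ∫⁻ ξ, (∫⁻ x, ‖jap ξ ^ σ * Φ u x ξ‖ₑ) ^ 2 := by
        rw [← lintegral_const_mul' _ _ (by simp)]
    _ ≤ _ := by
        push_cast; rw [mul_assoc]; gcongr; exact b1 u

def DXf (k : Fin 3) (Φ Φ' : SS → E3 → E3 → ℝ) : Prop :=
  ∀ u x ξ, ∃ L : E3 →L[ℝ] ℝ, HasFDerivAt (fun y => Φ u y ξ) L x ∧ L (se k) = Φ' u x ξ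

structure Nice (σ : ℝ) (En : SS → ℝ≥0∞) (Φ : SS → E3 → E3 → ℝ) : Prop where
  z1 : FZ1 σ En Φ
  l2 : FL2 σ En Φ
  dx : ∀ k, ∃ Φ', FL2 σ En Φ' ∧ DXf k Φ Φ'

lemma Nice.add {σ En Φ Θ} (h1 : Nice σ En Φ) (h2 : Nice σ En Θ) :
    Nice σ En (fun u x ξ => Φ u x ξ + Θ u x ξ) := by
  refine ⟨h1.z1.add h2.z1, h1.l2.add h2.l2, fun k => ?_⟩
  obtain ⟨Φ', a1, b1⟩ := h1.dx k
  obtain ⟨Θ', a2, b2⟩ := h2.dx k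
  refine ⟨_, a1.add a2, fun u x ξ => ?_⟩
  obtain ⟨L1, c1, d1⟩ := b1 u x ξ
  obtain ⟨L2, c2, d2⟩ := b2 u x ξ
  exact ⟨L1 + L2, c1.fun_add c2, by simp [d1, d2]⟩

lemma Nice.smul {σ En Φ} (c : ℝ) (h1 : Nice σ En Φ) :
    Nice σ En (fun u x ξ => c * Φ u x ξ) := by
  refine ⟨h1.z1.smul c, h1.l2.smul c, fun k => ?_⟩
  obtain ⟨Φ', a1, b1⟩ := h1.dx k
  refine ⟨_, a1.smul c, fun u x ξ => ?_⟩
  obtain ⟨L1, c1, d1⟩ := b1 u x ξ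
  exact ⟨c • L1, c1.const_mul c, by simp [d1]⟩

lemma Nice.sub {σ En Φ Θ} (h1 : Nice σ En Φ) (h2 : Nice σ En Θ) :
    Nice σ En (fun u x ξ => Φ u x ξ - Θ u x ξ) := by
  have := h1.add (h2.smul (-1))
  convert this using 4
  ring

lemma Nice.sum3 {σ En} {Φ : Fin 3 → SS → E3 → E3 → ℝ} (h1 : ∀ i, Nice σ En (Φ i)) :
    Nice σ En (fun u x ξ => ∑ i, Φ i u x ξ) := by
  simp only [Fin.sum_univ_three]
  exact ((h1 0).add (h1 1)).add (h1 2)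

section term
variable {σ τ : ℝ} {Ψ : E3 → E3 → ℝ} {C : ℝ≥0∞} {α : E3 → ℝ≥0∞} {h : SS}

lemma hmeas (τ : ℝ) (h : SS) : Measurable (fun z : E3 × E3 => ‖jap z.2 ^ τ * h z‖ₑ ^ 2) :=
  (wmeas τ (Ψ := fun x ξ => h (x, ξ)) (by exact h.continuous.measurable)).pow_const 2

lemma term_l2 (hC : C ≠ ⊤) (hα : Measurable α)
    (hb : ∀ x ξ, ‖jap ξ ^ σ * Ψ x ξ‖ₑ ^ 2 ≤ C * (α x * ‖jap ξ ^ τ * h (x, ξ)‖ₑ ^ 2)) :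
    ∫⁻ x, ∫⁻ ξ, ‖jap ξ ^ σ * Ψ x ξ‖ₑ ^ 2 ≤ C * ∫⁻ x, α x * ∫⁻ ξ, ‖jap ξ ^ τ * h (x, ξ)‖ₑ ^ 2 := by
  rw [← lintegral_const_mul' _ _ hC]
  refine lintegral_mono fun x => ?_
  have k := msec_l (f := fun x ξ => ‖jap ξ ^ τ * h (x, ξ)‖ₑ ^ 2) (hmeas τ h) x
  rw [← lintegral_const_mul _ k, ← lintegral_const_mul' _ _ hC]
  exact lintegral_mono fun ξ => hb x ξ

lemma term_l2a (hC : C ≠ ⊤) (hα : Measurable α)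
    (hb : ∀ x ξ, ‖jap ξ ^ σ * Ψ x ξ‖ₑ ^ 2 ≤ C * (α x * ‖jap ξ ^ τ * h (x, ξ)‖ₑ ^ 2))
    {A B : ℝ≥0∞} (hA : ∀ x, α x ≤ A) (hB : ∫⁻ x, ∫⁻ ξ, ‖jap ξ ^ τ * h (x, ξ)‖ₑ ^ 2 ≤ B) :
    ∫⁻ x, ∫⁻ ξ, ‖jap ξ ^ σ * Ψ x ξ‖ₑ ^ 2 ≤ C * (A * B) := by
  refine (term_l2 hC hα hb).trans ?_
  gcongr
  calc _ ≤ ∫⁻ x, A * ∫⁻ ξ, ‖jap ξ ^ τ * h (x, ξ)‖ₑ ^ 2 := by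
        refine lintegral_mono fun x => ?_
        gcongr
        exact hA x
    _ = A * ∫⁻ x, ∫⁻ ξ, ‖jap ξ ^ τ * h (x, ξ)‖ₑ ^ 2 :=
        lintegral_const_mul _ (Measurable.lintegral_prod_right' (hmeas τ h))
    _ ≤ _ := by gcongr

lemma term_l2b (hC : C ≠ ⊤) (hα : Measurable α)
    (hb : ∀ x ξ, ‖jap ξ ^ σ * Ψ x ξ‖ₑ ^ 2 ≤ C * (α x * ‖jap ξ ^ τ * h (x, ξ)‖ₑ ^ 2))
    {A B : ℝ≥0∞} (hA : ∫⁻ x, α x ≤ A) (hB : ∀ x, ∫⁻ ξ, ‖jap ξ ^ τ * h (x, ξ)‖ₑ ^ 2 ≤ B) :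
    ∫⁻ x, ∫⁻ ξ, ‖jap ξ ^ σ * Ψ x ξ‖ₑ ^ 2 ≤ C * (A * B) := by
  refine (term_l2 hC hα hb).trans ?_
  gcongr
  calc _ ≤ ∫⁻ x, α x * B := by
        refine lintegral_mono fun x => ?_
        gcongr
        exact hB x
    _ = (∫⁻ x, α x) * B := lintegral_mul_const _ hα
    _ ≤ _ := by gcongr

lemma term_z1 (hα : Measurable α)
    (hb : ∀ x ξ, ‖jap ξ ^ σ * Ψ x ξ‖ₑ ^ 2 ≤ C * (α x * ‖jap ξ ^ τ * h (x, ξ)‖ₑ ^ 2))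
    {A B : ℝ≥0∞} (hA : ∫⁻ x, α x ≤ A) (hB : ∫⁻ x, ∫⁻ ξ, ‖jap ξ ^ τ * h (x, ξ)‖ₑ ^ 2 ≤ B) :
    ∫⁻ ξ, (∫⁻ x, ‖jap ξ ^ σ * Ψ x ξ‖ₑ) ^ 2 ≤ C * (A * B) := by
  have hm := hmeas τ h
  have p1 : ∀ x ξ, ‖jap ξ ^ σ * Ψ x ξ‖ₑ ≤ (C * α x) ^ (1/2 : ℝ) * ‖jap ξ ^ τ * h (x, ξ)‖ₑ := by
    intro x ξ
    have := ENNReal.rpow_le_rpow (hb x ξ) (by norm_num : (0:ℝ) ≤ 1/2)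
    rw [← mul_assoc, ENNReal.mul_rpow_of_nonneg _ _ (by norm_num : (0:ℝ) ≤ 1/2)] at this
    simp only [← ENNReal.rpow_natCast, ← ENNReal.rpow_mul] at this
    norm_num at this ⊢
    exact this
  have hs : ∀ y : ℝ≥0∞, (y ^ (1/2 : ℝ)) ^ 2 = y := fun y => by
    rw [← ENNReal.rpow_natCast, ← ENNReal.rpow_mul]; norm_num
  have p2 : ∀ ξ, (∫⁻ x, ‖jap ξ ^ σ * Ψ x ξ‖ₑ) ^ 2 ≤ (C * A) * ∫⁻ x, ‖jap ξ ^ τ * h (x, ξ)‖ₑ ^ 2 := by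
    intro ξ
    calc _ ≤ (∫⁻ x, (C * α x) ^ (1/2 : ℝ) * ‖jap ξ ^ τ * h (x, ξ)‖ₑ) ^ 2 := by
          gcongr with x; exact p1 x ξ
      _ ≤ (∫⁻ x, ((C * α x) ^ (1/2 : ℝ)) ^ 2) * ∫⁻ x, ‖jap ξ ^ τ * h (x, ξ)‖ₑ ^ 2 := by
          apply lint_cs
          · exact ((hα.const_mul C).pow_const _).aemeasurable
          · exact ((wmeas τ (Ψ := fun x ξ => h (x, ξ)) (by exact h.continuous.measurable)).comp
              measurable_prodMk_right).aemeasurable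
      _ ≤ _ := by
          gcongr
          simp only [hs]
          rw [lintegral_const_mul _ hα]
          gcongr
  calc _ ≤ ∫⁻ ξ, (C * A) * ∫⁻ x, ‖jap ξ ^ τ * h (x, ξ)‖ₑ ^ 2 := lintegral_mono p2
    _ = (C * A) * ∫⁻ ξ, ∫⁻ x, ‖jap ξ ^ τ * h (x, ξ)‖ₑ ^ 2 :=
        lintegral_const_mul _ (Measurable.lintegral_prod_left' hm)
    _ = (C * A) * ∫⁻ x, ∫⁻ ξ, ‖jap ξ ^ τ * h (x, ξ)‖ₑ ^ 2 := by
        congr 1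
        exact lintegral_lintegral_swap (μ := (volume : Measure E3)) (ν := (volume : Measure E3))
          (f := fun ξ y => ‖jap ξ ^ τ * h (y, ξ)‖ₑ ^ 2) (hm.comp measurable_swap).aemeasurable
    _ ≤ (C * A) * B := by gcongr
    _ = _ := by rw [mul_assoc]

end term
end

noncomputable section
set_option linter.unusedSectionVars false
open scoped LineDeriv SchwartzMap ContDiff ENNReal NNReal

/-- A bilinear term of `Γ`. -/
def GT (γ : ℝ) (i j : Fin 3) (g : E3 → ℝ) (P R : SS → SS) (u : SS) (x ξ : E3) : ℝ :=
  TB γ i j (mulT g (P u)) x ξ * R u (x, ξ)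

/-- A bilinear term containing the force field. -/
def PT (i : Fin 3) (m : E3 → ℝ) (P R : SS → SS) (u : SS) (x ξ : E3) : ℝ :=
  LP (dx i (MM (P u))) x * (m ξ * R u (x, ξ))

section nice
variable (γ : ℝ) (N : ℕ) (ℓ σ : ℝ)

lemma GT_meas (hγ1 : -3 ≤ γ) (hγ2 : γ < -2) (i j : Fin 3) (g : E3 → ℝ) (P R : SS → SS) (u : SS) :
    Measurable (Function.uncurry (GT γ i j g P R u)) := by
  have h1 : Continuous (fun z : E3 × E3 => TT (Bij γ i j) iv (mulT g (P u)) z * R u z) :=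
    (TT_continuous (ker_B γ hγ1 hγ2 i j) _).mul (R u).continuous
  exact h1.measurable

lemma GT_pt (hγ1 : -3 ≤ γ) (hγ2 : γ < -2) (i j : Fin 3) (g : E3 → ℝ)
    (hg : g.HasTemperateGrowth) (K : ℝ) (hK : ∀ ξ, |g ξ| ≤ K * ((1 + ‖ξ‖) ^ 4)⁻¹) :
    ∃ C : ℝ≥0, ∀ (P R : SS → SS) (u : SS) (x ξ : E3), ‖jap ξ ^ σ * GT γ i j g P R u x ξ‖ₑ ^ 2 ≤
      (C : ℝ≥0∞) * ((∫⁻ η, ‖jap η ^ (0 : ℝ) * P u (x, η)‖ₑ ^ 2) * ‖jap ξ ^ (σ + (γ + 2)) * R u (x, ξ)‖ₑ ^ 2) := by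
  obtain ⟨C, hC, hb⟩ := TB_bound γ hγ1 hγ2 i j g hg K hK
  refine ⟨C.toNNReal, fun P R u x ξ => ?_⟩
  have e : jap ξ ^ σ * GT γ i j g P R u x ξ =
      (jap ξ ^ (-(γ + 2)) * TB γ i j (mulT g (P u)) x ξ) * (jap ξ ^ (σ + (γ + 2)) * R u (x, ξ)) := by
    have : jap ξ ^ σ = jap ξ ^ (-(γ + 2)) * jap ξ ^ (σ + (γ + 2)) := by
      rw [← Real.rpow_add (jap_pos ξ)]; congr 1; ring
    rw [this, GT]; ring
  rw [e, enorm_mul, mul_pow, ← mul_assoc]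
  simp only [Real.rpow_zero, one_mul]
  exact mul_le_mul_left (hb (P u) x ξ) _

lemma mslice (τ : ℝ) (h : SS) : Measurable (fun x => ∫⁻ η, ‖jap η ^ τ * h (x, η)‖ₑ ^ 2) :=
  mint_l (f := fun x ξ => ‖jap ξ ^ τ * h (x, ξ)‖ₑ ^ 2) (hmeas τ h)

/-- The numerical conditions on the parameters. -/
structure Par : Prop where
  g1 : -3 ≤ γ
  g2 : γ < -2
  n : 4 ≤ N
  l1 : (N : ℝ) ≤ ℓ - 1
  l2 : σ + 1 ≤ -(γ + 2) * (ℓ - 1)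

variable {γ N ℓ σ}

lemma Par.w0 (p : Par γ N ℓ σ) {b : ℕ} (hb : b ≤ 2) : (0 : ℝ) ≤ (γ + 2) * (b - (ℓ - 1)) := by
  have h1 : (b : ℝ) ≤ 2 := by exact_mod_cast hb
  have h2 : (4 : ℝ) ≤ N := by exact_mod_cast p.n
  have := p.g2; have := p.l1
  apply mul_nonneg_of_nonpos_of_nonpos <;> linarith

lemma Par.w1 (p : Par γ N ℓ σ) {b : ℕ} (hb : b ≤ 2) : σ + (γ + 2) ≤ (γ + 2) * (b - (ℓ - 1)) := by
  have h1 : (b : ℝ) ≤ 2 := by exact_mod_cast hb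
  have := p.g2; have := p.g1; have := p.l2
  nlinarith

lemma toC (C : ℝ≥0) (a : ℝ≥0∞) : (C : ℝ≥0∞) * (a * (8 * a)) = ((8 * C : ℝ≥0) : ℝ≥0∞) * a ^ 2 := by
  push_cast; ring

lemma toC2 (C : ℝ≥0) (a : ℝ≥0∞) : (C : ℝ≥0∞) * ((8 * a) * a) = ((8 * C : ℝ≥0) : ℝ≥0∞) * a ^ 2 := by
  push_cast; ring

lemma GT_l2 (p : Par γ N ℓ σ) (i j : Fin 3) (g : E3 → ℝ)
    (hg : g.HasTemperateGrowth) (K : ℝ) (hK : ∀ ξ, |g ξ| ≤ K * ((1 + ‖ξ‖) ^ 4)⁻¹)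
    (P R : SS → SS) {a₁ b₁ a₂ b₂ : ℕ} (hP : ∀ u, Good a₁ b₁ u (P u)) (hR : ∀ u, Good a₂ b₂ u (R u))
    (hb1 : b₁ ≤ 2) (hb2 : b₂ ≤ 2) (ht : a₁ + b₁ + a₂ + b₂ ≤ 3) :
    FL2 σ (En γ N ℓ) (GT γ i j g P R) := by
  refine ⟨GT_meas γ p.g1 p.g2 i j g P R, ?_⟩
  obtain ⟨C, hC⟩ := GT_pt γ σ p.g1 p.g2 i j g hg K hK
  refine ⟨8 * C, fun u => ?_⟩
  have hn := p.n
  by_cases h : a₁ + b₁ + 3 ≤ N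
  · have A := slice_sup γ N ℓ (hP u) h 0 (p.w0 hb1)
    have B := energy_le γ N ℓ (hR u) (by omega) _ (p.w1 hb2)
    rw [← toC2]
    exact term_l2a ENNReal.coe_ne_top (mslice 0 (P u)) (hC P R u) A B
  · have A := energy_le γ N ℓ (hP u) (by omega) 0 (p.w0 hb1)
    have B := slice_sup γ N ℓ (hR u) (by omega) _ (p.w1 hb2)
    rw [← toC]
    exact term_l2b ENNReal.coe_ne_top (mslice 0 (P u)) (hC P R u) A B

lemma GT_z1 (p : Par γ N ℓ σ) (i j : Fin 3) (g : E3 → ℝ)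
    (hg : g.HasTemperateGrowth) (K : ℝ) (hK : ∀ ξ, |g ξ| ≤ K * ((1 + ‖ξ‖) ^ 4)⁻¹)
    (P R : SS → SS) {a₁ b₁ a₂ b₂ : ℕ} (hP : ∀ u, Good a₁ b₁ u (P u)) (hR : ∀ u, Good a₂ b₂ u (R u))
    (hb1 : b₁ ≤ 2) (hb2 : b₂ ≤ 2) (ht : a₁ + b₁ + a₂ + b₂ ≤ 3) :
    FZ1 σ (En γ N ℓ) (GT γ i j g P R) := by
  refine ⟨GT_meas γ p.g1 p.g2 i j g P R, ?_⟩
  obtain ⟨C, hC⟩ := GT_pt γ σ p.g1 p.g2 i j g hg K hK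
  refine ⟨C, fun u => ?_⟩
  have hn := p.n
  have A := energy_le γ N ℓ (hP u) (by omega) 0 (p.w0 hb1)
  have B := energy_le γ N ℓ (hR u) (by omega) _ (p.w1 hb2)
  rw [sq (En γ N ℓ u)]
  exact term_z1 (mslice 0 (P u)) (hC P R u) A B

lemma GT_dx (p : Par γ N ℓ σ) (i j : Fin 3) (g : E3 → ℝ)
    (hg : g.HasTemperateGrowth) (P R : SS → SS) (k : Fin 3) :
    DXf k (GT γ i j g P R) (fun u x ξ => GT γ i j g (fun u => dx k (P u)) R u x ξ
      + GT γ i j g P (fun u => dx k (R u)) u x ξ) := by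
  intro u x ξ
  have h1 := TB_x γ p.g1 p.g2 i j (mulT g (P u)) x ξ
  have h2 := slice_x (R u) x ξ
  have h3 := h1.fun_mul h2
  refine ⟨_, h3, ?_⟩
  have e1 := TT_fderiv (ker_B γ p.g1 p.g2 i j) (mulT g (P u)) (x, ξ) (ex k)
  have e2 := dm_apply (ex k) (R u) (x, ξ)
  have e3 := dx_mulT hg (P u) k
  unfold GT
  beta_reduce
  rw [← e3]
  simp only [ex] at e1 e2
  simp [dx, ex, e2, TB, ← e1]
  ring

lemma GT_nice (p : Par γ N ℓ σ) (i j : Fin 3) (g : E3 → ℝ)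
    (hg : g.HasTemperateGrowth) (K : ℝ) (hK : ∀ ξ, |g ξ| ≤ K * ((1 + ‖ξ‖) ^ 4)⁻¹)
    (P R : SS → SS) {b₁ b₂ : ℕ} (hP : ∀ u, Good 0 b₁ u (P u)) (hR : ∀ u, Good 0 b₂ u (R u))
    (ht : b₁ + b₂ ≤ 2) : Nice σ (En γ N ℓ) (GT γ i j g P R) where
  z1 := GT_z1 p i j g hg K hK P R hP hR (by omega) (by omega) (by omega)
  l2 := GT_l2 p i j g hg K hK P R hP hR (by omega) (by omega) (by omega)
  dx := fun k => by
    refine ⟨_, FL2.add ?_ ?_, GT_dx p i j g hg P R k⟩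
    · exact GT_l2 p i j g hg K hK _ R (fun u => (hP u).dx k) hR (by omega) (by omega) (by omega)
    · exact GT_l2 p i j g hg K hK P _ hP (fun u => (hR u).dx k) (by omega) (by omega) (by omega)

lemma PT_meas (i : Fin 3) (m : E3 → ℝ) (hm : m.HasTemperateGrowth) (P R : SS → SS) (u : SS) :
    Measurable (Function.uncurry (PT i m P R u)) := by
  have h0 := (LP_differentiable (dx i (MM (P u)))).continuous
  have h2 := hm.1.continuous
  have h1 : Continuous (fun z : E3 × E3 => LP (dx i (MM (P u))) z.1 * (m z.2 * R u z)) :=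
    (h0.comp continuous_fst).mul ((h2.comp continuous_snd).mul (R u).continuous)
  exact h1.measurable

lemma PT_pt (i : Fin 3) (m : E3 → ℝ) (e : ℝ) (hm : ∀ ξ, |m ξ| ≤ jap ξ ^ e)
    (P R : SS → SS) (u : SS) (x ξ : E3) : ‖jap ξ ^ σ * PT i m P R u x ξ‖ₑ ^ 2 ≤
      ((1 : ℝ≥0) : ℝ≥0∞) * (‖LP (dx i (MM (P u))) x‖ₑ ^ 2 * ‖jap ξ ^ (σ + e) * R u (x, ξ)‖ₑ ^ 2) := by
  rw [ENNReal.coe_one, one_mul, ← mul_pow, ← enorm_mul]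
  gcongr
  rw [enorm_le_iff_norm_le]
  unfold PT
  rw [Real.rpow_add (jap_pos ξ)]
  simp only [norm_mul]
  have h1 : ‖m ξ‖ ≤ ‖jap ξ ^ e‖ := by
    rw [Real.norm_eq_abs, Real.norm_eq_abs]
    exact (hm ξ).trans (le_abs_self _)
  calc ‖jap ξ ^ σ‖ * (‖LP (dx i (MM (P u))) x‖ * (‖m ξ‖ * ‖R u (x, ξ)‖))
      ≤ ‖jap ξ ^ σ‖ * (‖LP (dx i (MM (P u))) x‖ * (‖jap ξ ^ e‖ * ‖R u (x, ξ)‖)) := by gcongr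
    _ = _ := by ring

lemma LPm (h : SS) : Measurable (fun x => ‖LP h x‖ₑ ^ 2) :=
  ((LP_differentiable h).continuous.measurable).enorm.pow_const 2

lemma PT_l2 (p : Par γ N ℓ σ) (i : Fin 3) (m : E3 → ℝ) (hmt : m.HasTemperateGrowth) (e : ℝ)
    (hm : ∀ ξ, |m ξ| ≤ jap ξ ^ e) (P R : SS → SS) {a₁ a₂ b₂ : ℕ} (hP : ∀ u, Good a₁ 0 u (P u))
    (hR : ∀ u, Good a₂ b₂ u (R u)) (h1 : a₁ ≤ 1) (h2 : a₂ + b₂ ≤ 2)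
    (hw : σ + e ≤ (γ + 2) * (b₂ - (ℓ - 1))) :
    FL2 σ (En γ N ℓ) (PT i m P R) := by
  refine ⟨PT_meas i m hmt P R, 8 * 1, fun u => ?_⟩
  have hn := p.n
  have A := phi_sup γ N ℓ (hP u) (by omega) i
  have B := energy_le γ N ℓ (hR u) (by omega) _ hw
  rw [← toC2]
  exact term_l2a ENNReal.coe_ne_top (LPm _) (PT_pt i m e hm P R u) A B

lemma PT_z1 (p : Par γ N ℓ σ) (i : Fin 3) (m : E3 → ℝ) (hmt : m.HasTemperateGrowth) (e : ℝ)
    (hm : ∀ ξ, |m ξ| ≤ jap ξ ^ e) (P R : SS → SS) {a₁ a₂ b₂ : ℕ} (hP : ∀ u, Good a₁ 0 u (P u))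
    (hR : ∀ u, Good a₂ b₂ u (R u)) (h1 : a₁ ≤ 1) (h2 : a₂ + b₂ ≤ 2)
    (hw : σ + e ≤ (γ + 2) * (b₂ - (ℓ - 1))) :
    FZ1 σ (En γ N ℓ) (PT i m P R) := by
  refine ⟨PT_meas i m hmt P R, 1, fun u => ?_⟩
  have hn := p.n
  have A := phi_le γ N ℓ (hP u) (by omega) i
  have B := energy_le γ N ℓ (hR u) (by omega) _ hw
  rw [sq (En γ N ℓ u)]
  exact term_z1 (LPm _) (PT_pt i m e hm P R u) A B

lemma PT_dx (i : Fin 3) (m : E3 → ℝ) (P R : SS → SS) (k : Fin 3) :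
    DXf k (PT i m P R) (fun u x ξ => PT i m (fun u => dx k (P u)) R u x ξ
      + PT i m P (fun u => dx k (R u)) u x ξ) := by
  intro u x ξ
  have h1 := (LP_differentiable (dx i (MM (P u))) x).hasFDerivAt
  have h2 := (slice_x (R u) x ξ).const_mul (m ξ)
  have h3 := h1.fun_mul h2
  refine ⟨_, h3, ?_⟩
  have e1 := congrFun (pd_LP k (dx i (MM (P u)))) x
  have e2 := dm_apply (ex k) (R u) (x, ξ)
  have e3 : dx k (dx i (MM (P u))) = dx i (MM (dx k (P u))) := by
    have : dx k (dx i (MM (P u))) = dx i (dx k (MM (P u))) :=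
      LinearMap.congr_fun (dm_comm (ex k) (ex i)).eq (MM (P u))
    rw [this]
    congr 1
    exact dx_mulT sqrtM_temperate (P u) k
  rw [e3] at e1
  unfold PT
  beta_reduce
  rw [← e1]
  simp only [ex] at e2
  simp [dx, ex, e2, pd]
  ring

lemma PT_nice (p : Par γ N ℓ σ) (i : Fin 3) (m : E3 → ℝ) (hmt : m.HasTemperateGrowth) (e : ℝ)
    (hm : ∀ ξ, |m ξ| ≤ jap ξ ^ e) (R : SS → SS) {b₂ : ℕ}
    (hR : ∀ u, Good 0 b₂ u (R u)) (h2 : b₂ ≤ 1)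
    (hw : σ + e ≤ (γ + 2) * (b₂ - (ℓ - 1))) :
    Nice σ (En γ N ℓ) (PT i m (fun u => u) R) where
  z1 := PT_z1 p i m hmt e hm _ R Good.refl hR (by omega) (by omega) hw
  l2 := PT_l2 p i m hmt e hm _ R Good.refl hR (by omega) (by omega) hw
  dx := fun k => by
    refine ⟨_, FL2.add ?_ ?_, PT_dx i m _ R k⟩
    · exact PT_l2 p i m hmt e hm _ R (fun u => (Good.refl u).dx k) hR (by omega) (by omega) hw
    · exact PT_l2 p i m hmt e hm _ _ Good.refl (fun u => (hR u).dx k) (by omega) (by omega) hw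

end nice
end

noncomputable section
set_option linter.unusedSectionVars false
open scoped LineDeriv SchwartzMap ContDiff ENNReal NNReal

variable {γ : ℝ} {N : ℕ} {ℓ σ : ℝ}

lemma XXMM (j : Fin 3) (h : SS) : XX j (MM h) = mulT (fun ξ => sqrtM ξ * ξ j) h := by
  ext z
  have hx : (fun ξ : E3 => sqrtM ξ * ξ j).HasTemperateGrowth := sqrtM_temperate.mul (coord_temperate j)
  rw [XX_apply, MM_apply, mulT_apply hx]
  ring

lemma bd_M (ξ : E3) : |sqrtM ξ| ≤ (Real.exp 25 * (2 * π) ^ (-(3 : ℝ) / 4)) * ((1 + ‖ξ‖) ^ 4)⁻¹ := by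
  have := sqrtM_mul_bd (fun _ => 1) (fun ξ => by simp) ξ
  simpa using this

lemma bd_X (j : Fin 3) (ξ : E3) :
    |sqrtM ξ * ξ j| ≤ (Real.exp 25 * (2 * π) ^ (-(3 : ℝ) / 4)) * ((1 + ‖ξ‖) ^ 4)⁻¹ :=
  sqrtM_mul_bd (fun ξ => ξ j) (fun ξ => (coord_le ξ j).trans (by linarith [norm_nonneg ξ])) ξ

lemma G_eq (hγ1 : -3 ≤ γ) (hγ2 : γ < -2) (u : SS) (x ξ : E3) : Gfun γ (uc u) x ξ =
    (1/2) * (∑ i, PT i (fun ξ => ξ i) (fun u => u) (fun u => u) u x ξ)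
      - (∑ i, PT i (fun _ => 1) (fun u => u) (fun u => dv i u) u x ξ)
      + ∑ i, ∑ j, (GT γ i j sqrtM (fun u => u) (fun u => dv i (dv j u)) u x ξ
        - GT γ i j (fun ξ => sqrtM ξ * ξ j) (fun u => u) (fun u => dv i u) u x ξ
        + GT γ i j (fun ξ => sqrtM ξ * ξ j) (fun u => dv i u) (fun u => u) u x ξ
        - GT γ i j sqrtM (fun u => dv i (dv j u)) (fun u => u) u x ξ) := by
  unfold Gfun
  rw [Gam_formula γ hγ1 hγ2]
  simp only [XXMM, pd_phiF, pd_uc, GT, PT]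
  congr 1
  congr 1
  · rw [mul_assoc, Finset.sum_mul]
    congr 1
    refine Finset.sum_congr rfl fun i _ => ?_
    simp only [uc]; ring
  · refine Finset.sum_congr rfl fun i _ => ?_
    simp only [uc]; ring

lemma G_nice (p : Par γ N ℓ σ) : Nice σ (En γ N ℓ) (fun u => Gfun γ (uc u)) := by
  have e : (fun u : SS => Gfun γ (uc u)) = fun u x ξ => _ :=
    funext fun u => funext fun x => funext fun ξ => G_eq p.g1 p.g2 u x ξ
  rw [e]
  have hs := sqrtM_temperate
  have hx : ∀ j : Fin 3, (fun ξ : E3 => sqrtM ξ * ξ j).HasTemperateGrowth :=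
    fun j => sqrtM_temperate.mul (coord_temperate j)
  refine Nice.add (Nice.sub (Nice.smul _ (Nice.sum3 fun i => ?_)) (Nice.sum3 fun i => ?_))
    (Nice.sum3 fun i => Nice.sum3 fun j => Nice.sub (Nice.add (Nice.sub ?_ ?_) ?_) ?_)
  · refine PT_nice p i _ (coord_temperate i) 1 (fun ξ => ?_) _ Good.refl (by omega) ?_
    · rw [Real.rpow_one]
      exact (coord_le ξ i).trans (norm_le_jap ξ)
    · have := p.l2
      push_cast; linarith
  · refine PT_nice p i _ (Function.HasTemperateGrowth.const 1) 0 (fun ξ => by simp) _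
      (fun u => (Good.refl u).dv i) (by omega) ?_
    have := p.l2; have := p.g1
    push_cast; linarith
  · exact GT_nice p i j _ hs _ bd_M _ _ Good.refl (fun u => ((Good.refl u).dv j).dv i) (by omega)
  · exact GT_nice p i j _ (hx j) _ (bd_X j) _ _ Good.refl (fun u => (Good.refl u).dv i) (by omega)
  · exact GT_nice p i j _ (hx j) _ (bd_X j) _ _ (fun u => (Good.refl u).dv i) Good.refl (by omega)
  · exact GT_nice p i j _ hs _ bd_M _ _ (fun u => ((Good.refl u).dv j).dv i) Good.refl (by omega)

lemma triSq_nonneg (u : E3 → E3 → ℝ) : 0 ≤ triSq γ N (ℓ - 1) 0 1 0 u :=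
  add_nonneg (Finset.sum_nonneg fun _ _ => xnormSq_nonneg _ _ _ _ _ _) (gradSobSq_nonneg _ _)

lemma sqrt_bd {C : ℝ≥0} {I T : ℝ} (hT : 0 ≤ T) (h : ‖I‖ₑ ≤ C * ENNReal.ofReal T ^ 2) :
    √I ≤ √(C : ℝ) * T := by
  have h1 : ENNReal.ofReal I ≤ ENNReal.ofReal (C * T ^ 2) := by
    rw [ENNReal.ofReal_mul C.coe_nonneg, ENNReal.ofReal_pow hT, ENNReal.ofReal_coe_nnreal]
    refine le_trans ?_ h
    rw [← ofReal_norm_eq_enorm]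
    exact ENNReal.ofReal_le_ofReal (le_abs_self I)
  have h2 : I ≤ C * T ^ 2 := (ENNReal.ofReal_le_ofReal_iff (by positivity)).1 h1
  calc √I ≤ √(C * T ^ 2) := Real.sqrt_le_sqrt h2
    _ = _ := by rw [Real.sqrt_mul C.coe_nonneg, Real.sqrt_sq hT]

lemma l2_fin {Φ : SS → E3 → E3 → ℝ} (h : FL2 σ (En γ N ℓ) Φ) : ∃ C : ℝ, 0 ≤ C ∧ ∀ u : SS,
    √(∫ x, ∫ ξ, (jap ξ ^ σ * Φ u x ξ) ^ 2) ≤ C * triSq γ N (ℓ - 1) 0 1 0 (uc u) := by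
  obtain ⟨-, C, hC⟩ := h
  refine ⟨√C, by positivity, fun u => sqrt_bd (triSq_nonneg _) (le_trans ?_ (hC u))⟩
  refine (enorm_integral_le_lintegral_enorm _).trans (lintegral_mono fun x => ?_)
  refine (enorm_integral_le_lintegral_enorm _).trans (lintegral_mono fun ξ => ?_)
  rw [enorm_pow]

lemma z1_fin {Φ : SS → E3 → E3 → ℝ} (h : FZ1 σ (En γ N ℓ) Φ) : ∃ C : ℝ, 0 ≤ C ∧ ∀ u : SS,
    Z1 (fun x ξ => jap ξ ^ σ * Φ u x ξ) ≤ C * triSq γ N (ℓ - 1) 0 1 0 (uc u) := by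
  obtain ⟨-, C, hC⟩ := h
  refine ⟨√C, by positivity, fun u => sqrt_bd (triSq_nonneg _) (le_trans ?_ (hC u))⟩
  refine (enorm_integral_le_lintegral_enorm _).trans (lintegral_mono fun x => ?_)
  dsimp only
  rw [enorm_pow]
  gcongr
  refine (enorm_integral_le_lintegral_enorm _).trans (lintegral_mono fun ξ => ?_)
  rw [enorm_abs]

lemma Nice.pdxM {Φ : SS → E3 → E3 → ℝ} (h : Nice σ (En γ N ℓ) Φ) (α : MIdx) (hα : α ∈ midx 1) :
    FL2 σ (En γ N ℓ) (fun u => pdxM α (Φ u)) := by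
  have key : ∀ k, FL2 σ (En γ N ℓ) (fun u => pdx k (Φ u)) := fun k => by
    obtain ⟨Φ', a, b⟩ := h.dx k
    have : (fun u => pdx k (Φ u)) = Φ' := by
      funext u x ξ
      obtain ⟨L, c, d⟩ := b u x ξ
      rw [← d]
      unfold pdx
      rw [c.fderiv]
    rw [this]; exact a
  obtain ⟨a, b, c⟩ := α
  have hd : a + b + c ≤ 1 := by
    have := (Finset.mem_filter.1 hα).2
    exact this
  have hc : (a = 0 ∧ b = 0 ∧ c = 0) ∨ (a = 1 ∧ b = 0 ∧ c = 0) ∨ (a = 0 ∧ b = 1 ∧ c = 0) ∨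
      (a = 0 ∧ b = 0 ∧ c = 1) := by omega
  rcases hc with ⟨rfl, rfl, rfl⟩ | ⟨rfl, rfl, rfl⟩ | ⟨rfl, rfl, rfl⟩ | ⟨rfl, rfl, rfl⟩
  · exact h.l2
  · exact key 0
  · exact key 1
  · exact key 2

end

theorem nonlinear_source_estimate (γ : ℝ) (hγ1 : -3 ≤ γ) (hγ2 : γ < -2)
    (N : ℕ) (hN : 4 ≤ N) (ℓ₀ ℓ : ℝ) (hℓ₀ : 3 / 2 < ℓ₀)
    (hℓ : max (N : ℝ) (ℓ₀ / 2 - 1 / (γ + 2)) ≤ ℓ - 1) :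
    ∃ C > (0 : ℝ), ∀ u : SchwartzMap (E3 × E3) ℝ,
      Z1 (fun x ξ => jap ξ ^ (-(γ + 2) * ℓ₀ / 2) * Gfun γ (uc u) x ξ)
          + (∑ α ∈ midx 1, Real.sqrt (∫ x, ∫ ξ,
              (jap ξ ^ (-(γ + 2) * ℓ₀ / 2) * pdxM α (Gfun γ (uc u)) x ξ) ^ 2))
        ≤ C * triSq γ N (ℓ - 1) 0 1 0 (uc u) := by
  have h1 := (le_max_left _ _).trans hℓ
  have h2 := (le_max_right _ _).trans hℓ
  have p : Par γ N ℓ (-(γ + 2) * ℓ₀ / 2) := by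
    refine ⟨hγ1, hγ2, hN, h1, ?_⟩
    have hs : 0 < -(γ + 2) := by linarith
    have h3 := mul_le_mul_of_nonneg_left h2 hs.le
    have h4 : -(γ + 2) * (ℓ₀ / 2 - 1 / (γ + 2)) = -(γ + 2) * ℓ₀ / 2 + 1 := by
      have : γ + 2 ≠ 0 := by linarith
      field_simp
      ring
    linarith
  have hn := G_nice p
  obtain ⟨C0, hC0, b0⟩ := z1_fin hn.z1
  have hx : ∀ α : MIdx, ∃ C : ℝ, 0 ≤ C ∧ (α ∈ midx 1 → ∀ u : SS,
      √(∫ x, ∫ ξ, (jap ξ ^ (-(γ + 2) * ℓ₀ / 2) * pdxM α (Gfun γ (uc u)) x ξ) ^ 2)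
        ≤ C * triSq γ N (ℓ - 1) 0 1 0 (uc u)) := by
    intro α
    by_cases hα : α ∈ midx 1
    · obtain ⟨C, hC, b⟩ := l2_fin (hn.pdxM α hα)
      exact ⟨C, hC, fun _ => b⟩
    · exact ⟨0, le_rfl, fun h => absurd h hα⟩
  choose D hD bD using hx
  have hDs : 0 ≤ ∑ α ∈ midx 1, D α := Finset.sum_nonneg fun α _ => hD α
  refine ⟨C0 + (∑ α ∈ midx 1, D α) + 1, by linarith, fun u => ?_⟩
  have hT := triSq_nonneg (γ := γ) (N := N) (ℓ := ℓ) (uc u)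
  have hsum := Finset.sum_le_sum fun α hα => bD α hα u
  rw [← Finset.sum_mul] at hsum
  have := b0 u
  nlinarith

end
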